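/- Let p ≥ 2 be an integer and α ∈ (0, 1/(p−1)). Let (c_k)_{k≥1} be complex numbers with Σ_{k=1}^∞ |c_k|^α < ∞, let (φ_k)_{k≥1} be real numbers, and let γ_k : (0,∞) → ℂ be functions of bounded variation with sup_k Var(γ_k,(0,∞)) < ∞ and ∫_0^∞ (sup_k |γ_k(x)|)^p dx < ∞. Suppose the potential V(x) = Σ_{k=1}^∞ c_k e^{−iφ_k x} γ_k(x) is real-valued. Then the set S = {E > 0 : some solution of −u'' + V u = E u on (0,∞) is unbounded} has Hausdorff dimension at most (p−1)α. -/

import Mathlib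

open scoped BigOperators ENNReal
open MeasureTheory

/-- `u` (with derivative `u'`) is a solution of `-u'' + V u = E u` on `(0,∞)`:
`u` is differentiable with derivative `u'`, and `u'` is locally absolutely continuous
with `-u'' + V u = E u` almost everywhere, encoded in integral (FTC) form. -/
def IsWeakSolution (V : ℝ → ℝ) (E : ℝ) (u u' : ℝ → ℂ) : Prop :=
  (∀ x ∈ Set.Ioi (0:ℝ), HasDerivAt u (u' x) x) ∧
  ∀ a b : ℝ, 0 < a → a ≤ b →
    IntervalIntegrable (fun x => (V x : ℂ) * u x - (E : ℂ) * u x) volume a b ∧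
    u' b - u' a = ∫ x in a..b, ((V x : ℂ) * u x - (E : ℂ) * u x)

/-- A geometric series with real exponents converges. -/
theorem tsum_two_rpow_neg_ne_top {δ : ℝ} (hδ : 0 < δ) :
    ∑' j : ℕ, (2 : ℝ≥0∞) ^ (-((j : ℝ) * δ)) ≠ ⊤ := by
  have h : ∀ j : ℕ, (2 : ℝ≥0∞) ^ (-((j : ℝ) * δ)) = ((2 : ℝ≥0∞) ^ (-δ)) ^ j := by
    intro j
    rw [← ENNReal.rpow_natCast, ← ENNReal.rpow_mul]
    congr 1; ring
  simp_rw [h]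
  rw [ENNReal.tsum_geometric]
  apply ENNReal.inv_ne_top.2
  have : (2 : ℝ≥0∞) ^ (-δ) < 1 := ENNReal.rpow_lt_one_of_one_lt_of_neg (by norm_num) (by linarith)
  exact (tsub_pos_of_lt this).ne'

theorem rpow_neg_le_dyadic_sum {s : ℝ} (hs : 0 < s) (N : ℕ) (d : ℝ) (hd : 0 ≤ d) :
    (ENNReal.ofReal d) ^ (-s) ≤ (2 : ℝ≥0∞) ^ ((N : ℝ) * s) +
      ∑' j : ℕ, (if d ≤ 2⁻¹ ^ (N + j) then (2 : ℝ≥0∞) ^ (((N + j : ℕ) + 1 : ℝ) * s) else 0) := by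
  rcases hd.eq_or_lt with rfl | hd
  · have h1 : ∀ j : ℕ, (1 : ℝ≥0∞) ≤ (if (0:ℝ) ≤ 2⁻¹ ^ (N + j) then
        (2 : ℝ≥0∞) ^ (((N + j : ℕ) + 1 : ℝ) * s) else 0) := by
      intro j
      rw [if_pos (by positivity)]
      apply ENNReal.one_le_rpow (by norm_num)
      positivity
    have := ENNReal.tsum_le_tsum h1
    rw [ENNReal.tsum_const_eq_top_of_ne_zero one_ne_zero, top_le_iff] at this
    rw [this]; simp
  · by_cases hN : (2⁻¹ : ℝ) ^ N < d
    · refine le_trans ?_ le_self_add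
      have h2 : (2 : ℝ≥0∞) ^ ((N : ℝ) * s) = (ENNReal.ofReal ((2⁻¹ : ℝ) ^ N)) ^ (-s) := by
        rw [ENNReal.ofReal_pow (by norm_num), ENNReal.ofReal_inv_of_pos (by norm_num),
          ENNReal.rpow_neg, ← ENNReal.rpow_natCast, ← ENNReal.rpow_mul, ENNReal.inv_rpow, inv_inv]
        simp
      rw [h2, ENNReal.rpow_neg, ENNReal.rpow_neg]
      gcongr
    · push Not at hN
      have hex : ∃ n : ℕ, (2⁻¹ : ℝ) ^ n < d := exists_pow_lt_of_lt_one hd (by norm_num)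
      classical
      set n := Nat.find hex with hn
      have hn1 : (2⁻¹ : ℝ) ^ n < d := Nat.find_spec hex
      have hNn : N < n := by
        by_contra! h
        have := pow_le_pow_of_le_one (by norm_num : (0:ℝ) ≤ 2⁻¹) (by norm_num) h
        linarith
      obtain ⟨j, hj⟩ : ∃ j, n = N + j + 1 := ⟨n - N - 1, by omega⟩
      have hj1 : d ≤ (2⁻¹ : ℝ) ^ (N + j) := by
        by_contra! h
        exact Nat.find_min hex (m := N + j) (by omega) h
      refine le_trans ?_ le_add_self
      refine le_trans ?_ (ENNReal.le_tsum j)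
      rw [if_pos hj1]
      have h2 : (2 : ℝ≥0∞) ^ (((N + j : ℕ) + 1 : ℝ) * s) = (ENNReal.ofReal ((2⁻¹ : ℝ) ^ n)) ^ (-s) := by
        rw [ENNReal.ofReal_pow (by norm_num), ENNReal.ofReal_inv_of_pos (by norm_num),
          ENNReal.rpow_neg, ← ENNReal.rpow_natCast, ← ENNReal.rpow_mul, ENNReal.inv_rpow, inv_inv, hj]
        simp
      rw [h2, ENNReal.rpow_neg, ENNReal.rpow_neg]
      gcongr

theorem abs_floor_sub_floor_le_one {a b : ℝ} (h : |a - b| ≤ 1) : |⌊b⌋ - ⌊a⌋| ≤ 1 := by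
  rw [abs_le] at *
  have h1 := Int.floor_le a
  have h2 := Int.lt_floor_add_one a
  have h3 := Int.floor_le b
  have h4 := Int.lt_floor_add_one b
  constructor
  · have : (⌊a⌋ : ℝ) < ⌊b⌋ + 2 := by linarith
    have : ⌊a⌋ < ⌊b⌋ + 2 := by exact_mod_cast this
    omega
  · have : (⌊b⌋ : ℝ) < ⌊a⌋ + 2 := by linarith
    have : ⌊b⌋ < ⌊a⌋ + 2 := by exact_mod_cast this
    omega

/-- The mass that the point masses `b i` at `t i` give to the dyadic interval of generation `j` and
index `m`, enlarged by its two neighbours. -/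
noncomputable def dyadicMass {ι : Type*} (b : ι → ℝ≥0∞) (t : ι → ℝ) (j : ℕ) (m : ℤ) : ℝ≥0∞ :=
  ∑' i, b i * (if |⌊(2:ℝ) ^ j * t i⌋ - m| ≤ 1 then 1 else 0)

theorem tsum_dyadicMass_le {ι : Type*} (b : ι → ℝ≥0∞) (t : ι → ℝ) (j : ℕ) :
    ∑' m, dyadicMass b t j m ≤ 3 * ∑' i, b i := by
  unfold dyadicMass
  rw [ENNReal.tsum_comm, ← ENNReal.tsum_mul_left]
  refine ENNReal.tsum_le_tsum fun i => ?_
  rw [ENNReal.tsum_mul_left, mul_comm]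
  gcongr
  set a := ⌊(2:ℝ) ^ j * t i⌋
  rw [tsum_eq_sum (s := Finset.Icc (a - 1) (a + 1))]
  · calc _ ≤ ∑ m ∈ Finset.Icc (a - 1) (a + 1), (1 : ℝ≥0∞) := by
          gcongr; split_ifs <;> simp
      _ = 3 := by
          have : a + 1 + 1 - (a - 1) = 3 := by ring
          simp [this]
  · intro m hm
    rw [if_neg]
    simp only [Finset.mem_Icc] at hm
    rw [abs_le]
    omega

/-- A point where the potential is infinite has large dyadic density at arbitrarily small scales. -/
theorem exists_dyadicMass_gt_of_potential_eq_top {ι : Type*} (b : ι → ℝ≥0∞) (t : ι → ℝ)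
    (hb : ∑' i, b i ≠ ⊤) {s β : ℝ} (hs : 0 < s) (hsβ : s < β) {x : ℝ}
    (hx : ∑' i, b i * (ENNReal.ofReal |x - t i|) ^ (-s) = ⊤) (N : ℕ) :
    ∃ j : ℕ, (2 : ℝ≥0∞) ^ (-((N + j : ℕ) * β)) < dyadicMass b t (N + j) ⌊(2:ℝ) ^ (N + j) * x⌋ := by
  by_contra! hcon
  have key : ∑' i, b i * (ENNReal.ofReal |x - t i|) ^ (-s) ≤
      (2 : ℝ≥0∞) ^ ((N : ℝ) * s) * ∑' i, b i +
        (2 : ℝ≥0∞) ^ s * ∑' j : ℕ, (2 : ℝ≥0∞) ^ (-((j : ℝ) * (β - s))) := by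
    calc ∑' i, b i * (ENNReal.ofReal |x - t i|) ^ (-s)
        ≤ ∑' i, (b i * (2 : ℝ≥0∞) ^ ((N : ℝ) * s) + ∑' j : ℕ,
            (2 : ℝ≥0∞) ^ (((N + j : ℕ) + 1 : ℝ) * s) *
            (b i * (if |⌊(2:ℝ) ^ (N + j) * t i⌋ - ⌊(2:ℝ) ^ (N + j) * x⌋| ≤ 1 then 1 else 0))) := by
          refine ENNReal.tsum_le_tsum fun i => ?_
          refine (mul_le_mul_right (rpow_neg_le_dyadic_sum hs N _ (abs_nonneg _)) _).trans ?_
          rw [mul_add, ← ENNReal.tsum_mul_left]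
          refine add_le_add_right (ENNReal.tsum_le_tsum fun j => ?_) _
          split_ifs with h1 h2
          · simp [mul_comm]
          · exfalso
            apply h2
            apply abs_floor_sub_floor_le_one
            rw [← mul_sub, abs_mul, abs_of_pos (by positivity : (0:ℝ) < 2 ^ (N + j))]
            calc (2:ℝ) ^ (N + j) * |x - t i| ≤ 2 ^ (N + j) * 2⁻¹ ^ (N + j) := by gcongr
              _ = 1 := by rw [← mul_pow]; norm_num
          · simp
          · simp
      _ = (2 : ℝ≥0∞) ^ ((N : ℝ) * s) * ∑' i, b i + ∑' j : ℕ,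
            (2 : ℝ≥0∞) ^ (((N + j : ℕ) + 1 : ℝ) * s) *
              dyadicMass b t (N + j) ⌊(2:ℝ) ^ (N + j) * x⌋ := by
          rw [ENNReal.tsum_add, ENNReal.tsum_mul_right, mul_comm, ENNReal.tsum_comm]
          simp_rw [ENNReal.tsum_mul_left]
          rfl
      _ ≤ _ := by
          rw [← ENNReal.tsum_mul_left (a := (2 : ℝ≥0∞) ^ s)]
          refine add_le_add_right (ENNReal.tsum_le_tsum fun j => ?_) _
          refine (mul_le_mul_right (hcon j) _).trans ?_
          rw [← ENNReal.rpow_add _ _ (by norm_num) (by norm_num),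
            ← ENNReal.rpow_add _ _ (by norm_num) (by norm_num)]
          apply ENNReal.rpow_le_rpow_of_exponent_le (by norm_num)
          push_cast
          nlinarith [mul_nonneg (Nat.cast_nonneg (α := ℝ) N) (sub_nonneg.2 hsβ.le)]
  rw [hx, top_le_iff] at key
  have h2 : ∀ y : ℝ, (2 : ℝ≥0∞) ^ y ≠ ⊤ := fun y =>
    ENNReal.rpow_ne_top_of_ne_zero (by norm_num) (by norm_num)
  exact ENNReal.add_ne_top.2 ⟨ENNReal.mul_ne_top (h2 _) hb,
    ENNReal.mul_ne_top (h2 _) (tsum_two_rpow_neg_ne_top (sub_pos.2 hsβ))⟩ key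

/-- The set where the `s`-potential of a finite discrete measure on the line is infinite has
Hausdorff dimension at most `s`. -/
theorem dimH_potential_eq_top_le {ι : Type*} (b : ι → ℝ≥0∞) (t : ι → ℝ)
    (hb : ∑' i, b i ≠ ⊤) {s : ℝ} (hs : 0 < s) :
    dimH {x : ℝ | ∑' i, b i * (ENNReal.ofReal |x - t i|) ^ (-s) = ⊤} ≤ ENNReal.ofReal s := by
  set S := {x : ℝ | ∑' i, b i * (ENNReal.ofReal |x - t i|) ^ (-s) = ⊤}
  refine le_of_forall_gt fun d hd => ?_
  obtain ⟨β, hβ1, hβ2⟩ := ENNReal.lt_iff_exists_nnreal_btwn.1 hd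
  refine lt_of_le_of_lt ?_ hβ2
  have hsβ : s < β := by
    rwa [← ENNReal.ofReal_coe_nnreal, ENNReal.ofReal_lt_ofReal_iff_of_nonneg hs.le] at hβ1
  obtain ⟨β₁, h1, h2⟩ := exists_between hsβ
  apply dimH_le_of_hausdorffMeasure_ne_top
  classical
  let cover : ℕ → ℕ × ℤ → Set ℝ := fun N q =>
    if (2 : ℝ≥0∞) ^ (-((N + q.1 : ℕ) * β₁)) < dyadicMass b t (N + q.1) q.2 then
      {x | ⌊(2:ℝ) ^ (N + q.1) * x⌋ = q.2} else ∅
  have hdiam : ∀ N q, Metric.ediam (cover N q) ≤ (2⁻¹ : ℝ≥0∞) ^ (N + q.1) := by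
    intro N q
    simp only [cover]
    split_ifs
    · refine Metric.ediam_le fun x hx y hy => ?_
      have : |(2:ℝ) ^ (N + q.1) * x - (2:ℝ) ^ (N + q.1) * y| < 1 :=
        Int.abs_sub_lt_one_of_floor_eq_floor (hx.trans hy.symm)
      rw [← mul_sub, abs_mul, abs_of_pos (by positivity : (0:ℝ) < 2 ^ (N + q.1))] at this
      rw [edist_dist, Real.dist_eq]
      calc ENNReal.ofReal |x - y| ≤ ENNReal.ofReal ((2⁻¹ : ℝ) ^ (N + q.1)) := by
            apply ENNReal.ofReal_le_ofReal
            rw [inv_pow, ← one_div, le_div_iff₀ (by positivity), mul_comm]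
            exact this.le
        _ = _ := by
            rw [ENNReal.ofReal_pow (by norm_num), ENNReal.ofReal_inv_of_pos (by norm_num)]
            simp
    · simp
  have hcov : ∀ N, S ⊆ ⋃ q, cover N q := by
    intro N x hx
    obtain ⟨j, hj⟩ := exists_dyadicMass_gt_of_potential_eq_top b t hb hs h1 hx N
    refine Set.mem_iUnion.2 ⟨(j, ⌊(2:ℝ) ^ (N + j) * x⌋), ?_⟩
    simp only [cover]
    rw [if_pos hj]
    rfl
  have hlim : Filter.Tendsto (fun N : ℕ => (2⁻¹ : ℝ≥0∞) ^ N) Filter.atTop (nhds 0) :=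
    ENNReal.tendsto_pow_atTop_nhds_zero_of_lt_one (by norm_num)
  have hmeas := Measure.hausdorffMeasure_le_liminf_tsum (β : ℝ) S _ hlim cover
    (Filter.Eventually.of_forall fun N q => (hdiam N q).trans
      (pow_le_pow_right_of_le_one' (by norm_num) (by omega)))
    (Filter.Eventually.of_forall hcov)
  have hβ0 : (0:ℝ) < β := by linarith
  have hbound : ∀ N, ∑' q, Metric.ediam (cover N q) ^ (β : ℝ) ≤
      3 * (∑' i, b i) * ∑' j : ℕ, (2 : ℝ≥0∞) ^ (-((j : ℝ) * (β - β₁))) := by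
    intro N
    rw [ENNReal.tsum_prod', ← ENNReal.tsum_mul_left]
    refine ENNReal.tsum_le_tsum fun j => ?_
    calc ∑' m, Metric.ediam (cover N (j, m)) ^ (β : ℝ)
        ≤ ∑' m, (2 : ℝ≥0∞) ^ (-((j : ℝ) * (β - β₁))) * dyadicMass b t (N + j) m := by
          refine ENNReal.tsum_le_tsum fun m => ?_
          by_cases hm : (2 : ℝ≥0∞) ^ (-((N + j : ℕ) * β₁)) < dyadicMass b t (N + j) m
          · calc Metric.ediam (cover N (j, m)) ^ (β : ℝ)
                ≤ ((2⁻¹ : ℝ≥0∞) ^ (N + j)) ^ (β : ℝ) :=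
                  ENNReal.rpow_le_rpow (hdiam N (j, m)) hβ0.le
              _ ≤ (2 : ℝ≥0∞) ^ (-((j : ℝ) * (β - β₁))) * (2 : ℝ≥0∞) ^ (-((N + j : ℕ) * β₁)) := by
                  rw [← ENNReal.rpow_natCast, ← ENNReal.rpow_mul, ENNReal.inv_rpow,
                    ← ENNReal.rpow_neg, ← ENNReal.rpow_add _ _ (by norm_num) (by norm_num)]
                  apply ENNReal.rpow_le_rpow_of_exponent_le (by norm_num)
                  push_cast
                  nlinarith [mul_nonneg (Nat.cast_nonneg (α := ℝ) N) (sub_nonneg.2 h2.le)]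
              _ ≤ _ := by gcongr
          · have : cover N (j, m) = ∅ := by simp only [cover]; rw [if_neg hm]
            rw [this]; simp [ENNReal.zero_rpow_of_pos hβ0]
      _ = (2 : ℝ≥0∞) ^ (-((j : ℝ) * (β - β₁))) * ∑' m, dyadicMass b t (N + j) m :=
          ENNReal.tsum_mul_left
      _ ≤ (2 : ℝ≥0∞) ^ (-((j : ℝ) * (β - β₁))) * (3 * ∑' i, b i) := by
          gcongr; exact tsum_dyadicMass_le b t _
      _ = _ := mul_comm _ _
  refine ne_top_of_le_ne_top
    (b := 3 * (∑' i, b i) * ∑' j : ℕ, (2 : ℝ≥0∞) ^ (-((j : ℝ) * (β - β₁)))) ?_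
    (hmeas.trans (Filter.liminf_le_of_le (by isBoundedDefault) ?_))
  · exact ENNReal.mul_ne_top (ENNReal.mul_ne_top (by norm_num) hb)
      (tsum_two_rpow_neg_ne_top (sub_pos.2 h2))
  · intro c hc
    obtain ⟨N, hN⟩ := hc.exists
    exact hN.trans (hbound N)

theorem BinaryTree.node_uncurry_injective {α : Type*} :
    Function.Injective fun q : α × BinaryTree α × BinaryTree α =>
      BinaryTree.node q.1 q.2.1 q.2.2 := by
  rintro ⟨k, l, r⟩ ⟨k', l', r'⟩ h
  simpa using h

instance BinaryTree.instCountable {α : Type*} [Countable α] : Countable (BinaryTree α) := by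
  have key : ∀ n, {t : BinaryTree α | t.numNodes < n}.Countable := by
    intro n
    induction n with
    | zero => simp
    | succ n ih =>
      refine (((Set.countable_univ (α := α)).prod (ih.prod ih)).image
        (fun q : α × BinaryTree α × BinaryTree α => BinaryTree.node q.1 q.2.1 q.2.2) |>.insert
          BinaryTree.nil).mono ?_
      intro t ht
      cases t with
      | nil => exact Or.inl rfl
      | node k l r =>
        simp only [Set.mem_ofPred_eq, BinaryTree.numNodes] at ht
        exact Or.inr ⟨(k, l, r), ⟨trivial, by simp; omega, by simp; omega⟩, rfl⟩
  rw [← Set.countable_univ_iff]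
  refine (Set.countable_iUnion key).mono fun t _ => Set.mem_iUnion.2 ⟨t.numNodes + 1, ?_⟩
  simp

/-- The product of the weights of the nodes of a tree. -/
noncomputable def BinaryTree.weight (w : ℕ → ℝ≥0∞) : BinaryTree ℕ → ℝ≥0∞
  | .nil => 1
  | .node k l r => w k * (l.weight w * r.weight w)

/-- The sum of the frequencies of the nodes of a tree. -/
def BinaryTree.freq (φ : ℕ → ℝ) : BinaryTree ℕ → ℝ
  | .nil => 0
  | .node k l r => φ k + (l.freq φ + r.freq φ)

/-- One plus the sum of `y` over the nonempty subtrees (the empty ones counting one each). -/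
noncomputable def BinaryTree.subtreeSum (y : BinaryTree ℕ → ℝ≥0∞) : BinaryTree ℕ → ℝ≥0∞
  | .nil => 1
  | .node k l r => y (.node k l r) + (l.subtreeSum y + r.subtreeSum y)

/-- The maximum of `1` and the values of `x` at the nonempty subtrees. -/
noncomputable def BinaryTree.subtreeMax (x : BinaryTree ℕ → ℝ≥0∞) : BinaryTree ℕ → ℝ≥0∞
  | .nil => 1
  | .node k l r => max (x (.node k l r)) (max (l.subtreeMax x) (r.subtreeMax x))

theorem ENNReal.tsum_option {β : Type*} (g : Option β → ℝ≥0∞) :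
    ∑' o, g o = g none + ∑' q, g (some q) := by
  rw [← (Equiv.optionEquivSumPUnit.{0} β).symm.tsum_eq, ENNReal.summable.tsum_sum ENNReal.summable, add_comm]
  simp

theorem tsum_tree_le (f : BinaryTree ℕ → ℝ≥0∞) :
    ∑' t, f t ≤ f .nil + ∑' q : ℕ × BinaryTree ℕ × BinaryTree ℕ, f (.node q.1 q.2.1 q.2.2) := by
  let F : Option (ℕ × BinaryTree ℕ × BinaryTree ℕ) → BinaryTree ℕ :=
    fun o => o.elim .nil fun q => .node q.1 q.2.1 q.2.2
  have hF : Function.Surjective F := by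
    intro t
    cases t with
    | nil => exact ⟨none, rfl⟩
    | node k l r => exact ⟨some (k, l, r), rfl⟩
  refine (ENNReal.tsum_le_tsum_comp_of_surjective hF f).trans_eq ?_
  exact ENNReal.tsum_option _

theorem tsum_triple_mul {α β γ : Type*} (f : α → ℝ≥0∞) (g : β → ℝ≥0∞) (h : γ → ℝ≥0∞) :
    ∑' q : α × β × γ, f q.1 * (g q.2.1 * h q.2.2) = (∑' a, f a) * ((∑' b, g b) * ∑' c, h c) := by
  rw [ENNReal.tsum_prod', ← ENNReal.tsum_mul_right]
  congr 1; ext a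
  dsimp only
  rw [ENNReal.tsum_mul_left, ENNReal.tsum_prod', ← ENNReal.tsum_mul_right]
  congr 2; ext b
  dsimp only
  rw [ENNReal.tsum_mul_left]

theorem tsum_weight_ne_top {w : ℕ → ℝ≥0∞} (hw : ∑' k, w k ≠ ⊤) (n : ℕ) :
    ∑' t : BinaryTree ℕ, (if t.numNodes < n then t.weight w else 0) ≠ ⊤ := by
  induction n with
  | zero => simp
  | succ n ih =>
    refine ne_top_of_le_ne_top ?_ (tsum_tree_le _)
    refine ENNReal.add_ne_top.2 ⟨by simp [BinaryTree.weight], ?_⟩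
    refine ne_top_of_le_ne_top (ENNReal.mul_ne_top hw (ENNReal.mul_ne_top ih ih)) ?_
    rw [← tsum_triple_mul]
    refine ENNReal.tsum_le_tsum ?_
    rintro ⟨k, l, r⟩
    dsimp only
    by_cases h : (BinaryTree.node k l r).numNodes < n + 1
    · have hl : l.numNodes < n := by simp only [BinaryTree.numNodes] at h; omega
      have hr : r.numNodes < n := by simp only [BinaryTree.numNodes] at h; omega
      rw [if_pos h, if_pos hl, if_pos hr, BinaryTree.weight]
    · rw [if_neg h]
      exact zero_le

theorem tsum_weight_mul_subtreeSum_ne_top {w : ℕ → ℝ≥0∞} (hw : ∑' k, w k ≠ ⊤)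
    {y : BinaryTree ℕ → ℝ≥0∞} {p : ℕ}
    (hy : ∑' t : BinaryTree ℕ, (if t.numNodes < p then t.weight w else 0) * y t ≠ ⊤)
    (n : ℕ) (hn : n ≤ p) :
    ∑' t : BinaryTree ℕ, (if t.numNodes < n then t.weight w else 0) * t.subtreeSum y ≠ ⊤ := by
  induction n with
  | zero => simp
  | succ n ih =>
    have ih := ih (by omega)
    have hU := tsum_weight_ne_top hw n
    refine ne_top_of_le_ne_top ?_ (tsum_tree_le _)
    refine ENNReal.add_ne_top.2 ⟨by simp [BinaryTree.weight, BinaryTree.subtreeSum], ?_⟩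
    have hy' : ∑' q : ℕ × BinaryTree ℕ × BinaryTree ℕ,
        (if (BinaryTree.node q.1 q.2.1 q.2.2).numNodes < p then
          (BinaryTree.node q.1 q.2.1 q.2.2).weight w else 0) * y (.node q.1 q.2.1 q.2.2) ≠ ⊤ :=
      ne_top_of_le_ne_top hy (ENNReal.tsum_comp_le_tsum_of_injective
        BinaryTree.node_uncurry_injective
        fun t => (if t.numNodes < p then t.weight w else 0) * y t)
    refine ne_top_of_le_ne_top (ENNReal.add_ne_top.2 ⟨hy', ENNReal.add_ne_top.2
      ⟨ENNReal.mul_ne_top hw (ENNReal.mul_ne_top ih hU),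
        ENNReal.mul_ne_top hw (ENNReal.mul_ne_top hU ih)⟩⟩) ?_
    rw [← tsum_triple_mul, ← tsum_triple_mul, ← ENNReal.tsum_add, ← ENNReal.tsum_add]
    refine ENNReal.tsum_le_tsum ?_
    rintro ⟨k, l, r⟩
    simp only
    by_cases h : (BinaryTree.node k l r).numNodes < n + 1
    · have hl : l.numNodes < n := by simp only [BinaryTree.numNodes] at h; omega
      have hr : r.numNodes < n := by simp only [BinaryTree.numNodes] at h; omega
      rw [if_pos h, if_pos (h.trans_le hn), if_pos hl, if_pos hr]
      simp only [BinaryTree.subtreeSum, BinaryTree.weight]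
      apply le_of_eq
      ring
    · rw [if_neg h, zero_mul]
      exact zero_le

theorem ENNReal.tsum_ne_top_of_tsum_rpow_ne_top {ι : Type*} {f : ι → ℝ≥0∞} {α : ℝ} (h0 : 0 < α)
    (h1 : α ≤ 1) (hf : ∑' i, f i ^ α ≠ ⊤) : ∑' i, f i ≠ ⊤ := by
  set M := ∑' i, f i ^ α
  have hle : ∀ i, f i ≤ f i ^ α * (M ^ α⁻¹) ^ (1 - α) := by
    intro i
    have : f i ≤ M ^ α⁻¹ := by
      rw [ENNReal.le_rpow_inv_iff h0]
      exact ENNReal.le_tsum i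
    calc f i = f i ^ α * f i ^ (1 - α) := by
          rw [← ENNReal.rpow_add_of_nonneg _ _ h0.le (by linarith)]; simp
      _ ≤ _ := by
          gcongr
  refine ne_top_of_le_ne_top ?_ (ENNReal.tsum_le_tsum hle)
  rw [ENNReal.tsum_mul_right]
  refine ENNReal.mul_ne_top hf (ENNReal.rpow_ne_top_of_nonneg (by linarith)
    (ENNReal.rpow_ne_top_of_nonneg (by positivity) hf))

/-- The coefficients of the tree expansion of the approximate Riccati solution. -/
noncomputable def BinaryTree.coeff (c : ℕ → ℂ) (φ : ℕ → ℝ) (η : ℝ) : BinaryTree ℕ → ℂ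
  | .nil => 1
  | .node k l r => c k * (2 * η * (2 * η + (BinaryTree.node k l r).freq φ) : ℝ)⁻¹ *
      (l.coeff c φ η * r.coeff c φ η)

theorem BinaryTree.one_le_subtreeMax (x : BinaryTree ℕ → ℝ≥0∞) (t : BinaryTree ℕ) :
    1 ≤ t.subtreeMax x := by
  induction t with
  | nil => simp [subtreeMax]
  | node k l r hl hr => exact hl.trans ((le_max_left _ _).trans (le_max_right _ _))

theorem BinaryTree.enorm_coeff_le (c : ℕ → ℂ) (φ : ℕ → ℝ) (η : ℝ) (t : BinaryTree ℕ) :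
    ‖t.coeff c φ η‖ₑ ≤ t.weight (fun k => ‖c k‖ₑ) *
      t.subtreeMax (fun t => ‖(2 * η * (2 * η + t.freq φ))⁻¹‖ₑ) ^ t.numNodes := by
  induction t with
  | nil => simp [coeff, weight, subtreeMax]
  | node k l r hl hr =>
    rw [coeff, enorm_mul, enorm_mul, enorm_mul, weight]
    set x : BinaryTree ℕ → ℝ≥0∞ := fun t => ‖(2 * η * (2 * η + t.freq φ))⁻¹‖ₑ
    have h1 : ‖(((2 * η * (2 * η + (node k l r).freq φ))⁻¹ : ℝ) : ℂ)‖ₑ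
        ≤ (node k l r).subtreeMax x := by
      rw [subtreeMax, ← ofReal_norm, Complex.norm_real,
        ofReal_norm]
      exact le_max_left _ _
    have h2 : l.subtreeMax x ≤ (node k l r).subtreeMax x :=
      (le_max_left _ _).trans (le_max_right _ _)
    have h3 : r.subtreeMax x ≤ (node k l r).subtreeMax x :=
      (le_max_right _ _).trans (le_max_right _ _)
    set X := (node k l r).subtreeMax x
    have hl' := hl.trans (mul_le_mul_right (pow_le_pow_left' h2 l.numNodes) _)
    have hr' := hr.trans (mul_le_mul_right (pow_le_pow_left' h3 r.numNodes) _)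
    calc _ ≤ ‖c k‖ₑ * X * ((l.weight (fun k => ‖c k‖ₑ) * X ^ l.numNodes) *
          (r.weight (fun k => ‖c k‖ₑ) * X ^ r.numNodes)) := by
            gcongr
      _ = _ := by
          simp only [numNodes]
          ring

theorem BinaryTree.weight_rpow (w : ℕ → ℝ≥0∞) {α : ℝ} (hα : 0 ≤ α) (t : BinaryTree ℕ) :
    t.weight w ^ α = t.weight fun k => w k ^ α := by
  induction t with
  | nil => simp [weight]
  | node k l r hl hr => simp [weight, ENNReal.mul_rpow_of_nonneg _ _ hα, hl, hr]

theorem BinaryTree.subtreeMax_rpow_le (x : BinaryTree ℕ → ℝ≥0∞) {s : ℝ} (hs : 0 ≤ s)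
    (t : BinaryTree ℕ) : t.subtreeMax x ^ s ≤ t.subtreeSum fun t => x t ^ s := by
  induction t with
  | nil => simp [subtreeMax, subtreeSum]
  | node k l r hl hr =>
    simp only [subtreeMax, subtreeSum]
    rw [(ENNReal.monotone_rpow_of_nonneg hs).map_max, (ENNReal.monotone_rpow_of_nonneg hs).map_max]
    refine max_le le_self_add (max_le (hl.trans (le_self_add.trans le_add_self))
      (hr.trans (le_add_self.trans le_add_self)))

/-- Truncation of the tree coefficients to trees with fewer than `p` nodes. -/
noncomputable def BinaryTree.truncCoeff (p : ℕ) (c : ℕ → ℂ) (φ : ℕ → ℝ) (η : ℝ)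
    (t : BinaryTree ℕ) : ℂ :=
  if t.numNodes < p then t.coeff c φ η else 0

/-- Off the infinity set of an `(p - 1)α`-potential the truncated tree coefficients are
summable. -/
theorem summable_truncCoeff {p : ℕ} (hp : 2 ≤ p) {α : ℝ} (hα0 : 0 < α) (hα1 : α ≤ 1)
    {c : ℕ → ℂ} (hc : ∑' k, ‖c k‖ₑ ^ α ≠ ⊤) {φ : ℕ → ℝ} {η : ℝ} (hη : 0 < η)
    (hne : ∀ t : BinaryTree ℕ, 2 * η + t.freq φ ≠ 0)
    (hpot : ∑' t : BinaryTree ℕ,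
      (if t.numNodes < p then t.weight (fun k => ‖c k‖ₑ ^ α) else 0) *
        ENNReal.ofReal |2 * η - -t.freq φ| ^ (-(((p : ℝ) - 1) * α)) ≠ ⊤) :
    Summable fun t : BinaryTree ℕ => ‖t.truncCoeff p c φ η‖ := by
  set s := ((p : ℝ) - 1) * α with hsdef
  have hp' : (2 : ℝ) ≤ p := by exact_mod_cast hp
  have hs : 0 < s := mul_pos (by linarith) hα0
  set x : BinaryTree ℕ → ℝ≥0∞ := fun t => ‖(2 * η * (2 * η + t.freq φ))⁻¹‖ₑ with hx
  have hxs : ∀ t, x t ^ s =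
      ENNReal.ofReal (2 * η) ^ (-s) * ENNReal.ofReal |2 * η - -t.freq φ| ^ (-s) := by
    intro t
    have : 2 * η * (2 * η + t.freq φ) ≠ 0 := mul_ne_zero (by positivity) (hne t)
    rw [hx]
    simp only
    rw [enorm_inv this, ENNReal.inv_rpow, ← ENNReal.rpow_neg, enorm_mul, sub_neg_eq_add,
      ENNReal.mul_rpow_of_ne_top enorm_ne_top enorm_ne_top, Real.enorm_eq_ofReal_abs,
      Real.enorm_eq_ofReal_abs, abs_of_pos (by positivity : 0 < 2 * η)]
  have hy : ∑' t : BinaryTree ℕ, (if t.numNodes < p then t.weight (fun k => ‖c k‖ₑ ^ α) else 0)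
      * x t ^ s ≠ ⊤ := by
    simp_rw [hxs, mul_left_comm _ (ENNReal.ofReal (2 * η) ^ (-s))]
    rw [ENNReal.tsum_mul_left]
    refine ENNReal.mul_ne_top (ENNReal.rpow_ne_top_of_ne_zero ?_ ENNReal.ofReal_ne_top) hpot
    simp [hη]
  have hY := tsum_weight_mul_subtreeSum_ne_top hc hy p le_rfl
  have hfin : ∑' t : BinaryTree ℕ, ‖t.truncCoeff p c φ η‖ₑ ≠ ⊤ := by
    apply ENNReal.tsum_ne_top_of_tsum_rpow_ne_top hα0 hα1
    refine ne_top_of_le_ne_top hY (ENNReal.tsum_le_tsum fun t => ?_)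
    unfold BinaryTree.truncCoeff
    split_ifs with ht
    · calc ‖t.coeff c φ η‖ₑ ^ α
          ≤ (t.weight (fun k => ‖c k‖ₑ) * t.subtreeMax x ^ t.numNodes) ^ α :=
            ENNReal.rpow_le_rpow (t.enorm_coeff_le c φ η) hα0.le
        _ = t.weight (fun k => ‖c k‖ₑ ^ α) * t.subtreeMax x ^ (t.numNodes * α) := by
            rw [ENNReal.mul_rpow_of_nonneg _ _ hα0.le, t.weight_rpow _ hα0.le,
              ← ENNReal.rpow_natCast, ← ENNReal.rpow_mul]
        _ ≤ t.weight (fun k => ‖c k‖ₑ ^ α) * t.subtreeMax x ^ s := by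
            gcongr
            · exact t.one_le_subtreeMax x
            · rw [hsdef]
              gcongr
              have : t.numNodes + 1 ≤ p := ht
              have : (t.numNodes : ℝ) + 1 ≤ p := by exact_mod_cast this
              linarith
        _ ≤ _ := by
            gcongr
            exact t.subtreeMax_rpow_le x hs.le
    · simp [hα0]
  have := ENNReal.summable_toReal hfin
  simpa using this

theorem lintegral_eVariationOn_Icc_le (f : ℝ → ℂ) (hf : eVariationOn f (Set.Ioi 0) ≠ ⊤) :
    ∫⁻ x in Set.Ioi (0:ℝ), eVariationOn f (Set.Icc x (x + 2)) ≤
      2 * eVariationOn f (Set.Ioi 0) := by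
  set M := eVariationOn f (Set.Ioi 0)
  set W : ℝ → ℝ≥0∞ := fun x => eVariationOn f (Set.Ioc 0 x) with hW
  have hWmono : Monotone W := fun x y hxy => eVariationOn.mono f (Set.Ioc_subset_Ioc_right hxy)
  have hWM : ∀ x, W x ≤ M := fun x => eVariationOn.mono f Set.Ioc_subset_Ioi_self
  have hadd : ∀ x, 0 < x → W x + eVariationOn f (Set.Icc x (x + 2)) = W (x + 2) := by
    intro x hx
    rw [hW]
    dsimp only
    rw [← eVariationOn.union f (x := x) (isGreatest_Ioc hx) (isLeast_Icc (by linarith)),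
      Set.Ioc_union_Icc_eq_Ioc hx (by linarith)]
  have hN : ∀ N : ℕ, ∫⁻ x in Set.Ioc (0:ℝ) N, eVariationOn f (Set.Icc x (x + 2)) ≤ 2 * M := by
    intro N
    have hfin : ∫⁻ x in Set.Ioc (0:ℝ) N, W x ≠ ⊤ := by
      refine ne_top_of_le_ne_top ?_ (lintegral_mono hWM)
      simp only [lintegral_const, MeasurableSet.univ, Measure.restrict_apply, Set.univ_inter,
        Real.volume_Ioc]
      exact ENNReal.mul_ne_top hf ENNReal.ofReal_ne_top
    have h1 : (∫⁻ x in Set.Ioc (0:ℝ) N, W x) +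
        ∫⁻ x in Set.Ioc (0:ℝ) N, eVariationOn f (Set.Icc x (x + 2)) =
        ∫⁻ x in Set.Ioc (0:ℝ) N, W (x + 2) := by
      rw [← lintegral_add_left hWmono.measurable]
      exact setLIntegral_congr_fun measurableSet_Ioc fun x hx => hadd x hx.1
    have h2 : ∫⁻ x in Set.Ioc (0:ℝ) N, W (x + 2) = ∫⁻ x in Set.Ioc (2:ℝ) (N + 2), W x := by
      have := (measurePreserving_add_right (volume : Measure ℝ) 2).setLIntegral_comp_preimage_emb
        (MeasurableEquiv.addRight (2:ℝ)).measurableEmbedding W (Set.Ioc (2:ℝ) (N + 2))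
      rw [← this]
      simp
    have h3 : ∫⁻ x in Set.Ioc (2:ℝ) (N + 2), W x ≤ (∫⁻ x in Set.Ioc (0:ℝ) N, W x) + 2 * M := by
      calc ∫⁻ x in Set.Ioc (2:ℝ) (N + 2), W x
          ≤ ∫⁻ x in Set.Ioc (0:ℝ) N ∪ Set.Ioc (N:ℝ) (N + 2), W x := by
            apply lintegral_mono_set
            intro x hx
            rcases le_or_gt x N with h | h
            · exact Or.inl ⟨by linarith [hx.1], h⟩
            · exact Or.inr ⟨h, hx.2⟩
        _ ≤ _ := lintegral_union_le _ _ _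
        _ ≤ _ := by
            gcongr
            refine (lintegral_mono hWM).trans ?_
            simp [mul_comm]
    rw [h2] at h1
    rw [← h1] at h3
    exact (ENNReal.add_le_add_iff_left hfin).1 h3
  have hU : Set.Ioi (0:ℝ) = ⋃ N : ℕ, Set.Ioc (0:ℝ) N := by
    ext x
    simp only [Set.mem_Ioi, Set.mem_iUnion, Set.mem_Ioc]
    exact ⟨fun h => (exists_nat_ge x).imp fun n hn => ⟨h, hn⟩, fun ⟨n, h⟩ => h.1⟩
  rw [hU, setLIntegral_iUnion_of_directed]
  · exact iSup_le hN
  · exact (show Monotone fun N : ℕ => Set.Ioc (0:ℝ) N from fun a b h =>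
      Set.Ioc_subset_Ioc_right (by exact_mod_cast h)).directed_le

theorem BoundedVariationOn.aemeasurable_restrict {f : ℝ → ℂ} {s : Set ℝ} (hs : MeasurableSet s)
    (hf : BoundedVariationOn f s) : AEMeasurable f (volume.restrict s) := by
  have hre : BoundedVariationOn (fun x => (f x).re) s :=
    (Complex.reCLM.lipschitz).comp_boundedVariationOn hf
  have him : BoundedVariationOn (fun x => (f x).im) s :=
    (Complex.imCLM.lipschitz).comp_boundedVariationOn hf
  have key : ∀ g : ℝ → ℝ, BoundedVariationOn g s → AEMeasurable g (volume.restrict s) := by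
    intro g hg
    obtain ⟨a, b, ha, hb, rfl⟩ := hg.locallyBoundedVariationOn.exists_monotoneOn_sub_monotoneOn
    exact (aemeasurable_restrict_of_monotoneOn hs ha).sub
      (aemeasurable_restrict_of_monotoneOn hs hb)
  exact aemeasurable_of_re_im (𝕜 := ℂ) (key _ hre) (key _ him)

theorem exists_norm_le_of_eVariationOn_le {p : ℕ} (hp : p ≠ 0) {M : ℝ} (hM : 0 ≤ M) {f : ℝ → ℂ}
    (hvar : eVariationOn f (Set.Ioi 0) ≤ ENNReal.ofReal M)
    (hLp : ∫⁻ x in Set.Ioi (0:ℝ), ‖f x‖ₑ ^ p ≤ ENNReal.ofReal M) :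
    ∀ x ∈ Set.Ioi (0:ℝ), ‖f x‖ ≤ 2 * M + 1 := by
  have hy : ∃ y ∈ Set.Ioi (0:ℝ), ‖f y‖ ≤ M + 1 := by
    by_contra! h
    have h1 : ∫⁻ x in Set.Ioc (0:ℝ) 1, ENNReal.ofReal (M + 1) ≤ ENNReal.ofReal M := by
      calc ∫⁻ x in Set.Ioc (0:ℝ) 1, ENNReal.ofReal (M + 1)
          ≤ ∫⁻ x in Set.Ioc (0:ℝ) 1, ‖f x‖ₑ ^ p := by
            refine setLIntegral_mono' measurableSet_Ioc fun x hx => ?_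
            have hx := (h x hx.1).le
            rw [← ofReal_norm, ← ENNReal.ofReal_pow (norm_nonneg _)]
            exact ENNReal.ofReal_le_ofReal (hx.trans (le_self_pow₀ (by linarith) hp))
        _ ≤ _ := lintegral_mono_set Set.Ioc_subset_Ioi_self
        _ ≤ _ := hLp
    simp only [lintegral_const, MeasurableSet.univ, Measure.restrict_apply, Set.univ_inter,
        Real.volume_Ioc, sub_zero, ENNReal.ofReal_one, mul_one] at h1
    rw [ENNReal.ofReal_le_ofReal_iff hM] at h1
    linarith
  obtain ⟨y, hy0, hy⟩ := hy
  intro x hx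
  have h1 := (eVariationOn.edist_le f hx hy0).trans hvar
  rw [edist_dist, ENNReal.ofReal_le_ofReal_iff hM, dist_eq_norm] at h1
  have := norm_sub_norm_le (f x) (f y)
  linarith

theorem hasDerivAt_integral_add_one {f : ℝ → ℂ} (hf : Continuous f) (x : ℝ) :
    HasDerivAt (fun x => ∫ y in x..(x + 1), f y) (f (x + 1) - f x) x := by
  have hi : ∀ a b, IntervalIntegrable f volume a b := fun a b => hf.intervalIntegrable a b
  have h1 : (fun x => ∫ y in x..(x + 1), f y) =
      fun x => (∫ y in (0:ℝ)..(x + 1), f y) - ∫ y in (0:ℝ)..x, f y := by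
    ext x
    rw [intervalIntegral.integral_interval_sub_left (hi _ _) (hi _ _)]
  rw [h1]
  have h2 : ∀ x, HasDerivAt (fun x => ∫ y in (0:ℝ)..x, f y) (f x) x := fun x =>
    intervalIntegral.integral_hasDerivAt_right (hi _ _)
      hf.aestronglyMeasurable.stronglyMeasurableAtFilter hf.continuousAt
  exact ((h2 (x + 1)).comp_add_const x 1).sub (h2 x)

theorem norm_integral_add_one_sub_le {f : ℝ → ℂ} {x v : ℝ} {z : ℂ}
    (hf : IntervalIntegrable f volume x (x + 1))
    (h : ∀ y ∈ Set.Ioc x (x + 1), ‖f y - z‖ ≤ v) : ‖(∫ y in x..(x + 1), f y) - z‖ ≤ v := by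
  have h1 : (∫ y in x..(x + 1), f y) - z = ∫ y in x..(x + 1), (f y - z) := by
    rw [intervalIntegral.integral_sub hf intervalIntegrable_const]
    simp
  rw [h1]
  have := intervalIntegral.norm_integral_le_of_norm_le_const (a := x) (b := x + 1)
    (f := fun y => f y - z) (C := v) (by rw [Set.uIoc_of_le (by linarith)]; exact h)
  simpa using this

/-- Twofold averaging of a function of bounded variation in `L^p`: a `C¹` function with
uniform bounds, whose distance to the original function is integrable. -/
theorem exists_smoothing {p : ℕ} (hp : p ≠ 0) (M : ℝ) (hM : 0 ≤ M) : ∃ B : ℝ, 1 ≤ B ∧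
    ∀ f : ℝ → ℂ, eVariationOn f (Set.Ioi 0) ≤ ENNReal.ofReal M →
      ∫⁻ x in Set.Ioi (0:ℝ), ‖f x‖ₑ ^ p ≤ ENNReal.ofReal M →
      (∀ x ∈ Set.Ioi (0:ℝ), ‖f x‖ ≤ B) ∧
      ∃ g g' : ℝ → ℂ, (∀ x, HasDerivAt g (g' x) x) ∧ Continuous g' ∧
        (∀ x ∈ Set.Ioi (0:ℝ), ‖g x‖ ≤ B) ∧ (∀ x ∈ Set.Ioi (0:ℝ), ‖g' x‖ ≤ B) ∧
        ∫⁻ x in Set.Ioi (0:ℝ), ‖g x‖ₑ ^ p ≤ ENNReal.ofReal B ∧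
        ∫⁻ x in Set.Ioi (0:ℝ), ‖g' x‖ₑ ≤ ENNReal.ofReal B ∧
        ∫⁻ x in Set.Ioi (0:ℝ), ‖f x - g x‖ₑ ≤ ENNReal.ofReal B := by
  set B : ℝ := 2 * (2 * M + 1) + 4 * M + 2 ^ p * (M + (2 * M) * M ^ (p - 1)) with hB
  have hpos : 0 ≤ 2 ^ p * (M + (2 * M) * M ^ (p - 1)) := by positivity
  refine ⟨B, by linarith, fun f hvar hLp => ?_⟩
  have hKf := exists_norm_le_of_eVariationOn_le hp hM hvar hLp
  set K := 2 * M + 1 with hK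
  have hfin : eVariationOn f (Set.Ioi 0) ≠ ⊤ := ne_top_of_le_ne_top ENNReal.ofReal_ne_top hvar
  have hmeas := BoundedVariationOn.aemeasurable_restrict measurableSet_Ioi hfin
  set F : ℝ → ℂ := Set.indicator (Set.Ioi 0) f with hF
  have hFm : AEMeasurable F volume := (aemeasurable_indicator_iff measurableSet_Ioi).2 hmeas
  have hFK : ∀ x, ‖F x‖ ≤ K := by
    intro x
    by_cases hx : x ∈ Set.Ioi (0:ℝ)
    · rw [hF, Set.indicator_of_mem hx]; exact hKf x hx
    · rw [hF, Set.indicator_of_notMem hx, norm_zero]; linarith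
  have hFi : ∀ a b, IntervalIntegrable F volume a b := by
    intro a b
    refine (intervalIntegrable_const (c := K)).mono_fun' hFm.aestronglyMeasurable.restrict ?_
    exact Filter.Eventually.of_forall hFK
  set h : ℝ → ℂ := fun x => ∫ y in x..(x + 1), F y with hh
  have hcont : Continuous h := by
    have : h = fun x => (∫ y in (0:ℝ)..(x + 1), F y) - ∫ y in (0:ℝ)..x, F y := by
      ext x
      rw [intervalIntegral.integral_interval_sub_left (hFi _ _) (hFi _ _)]
    rw [this]
    have hc := intervalIntegral.continuous_primitive hFi 0
    exact (hc.comp (continuous_add_const 1)).sub hc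
  set v : ℝ → ℝ≥0∞ := fun x => eVariationOn f (Set.Icc x (x + 2)) with hv
  have hvM : ∀ x ∈ Set.Ioi (0:ℝ), v x ≤ ENNReal.ofReal M := fun x hx =>
    (eVariationOn.mono f fun y hy => lt_of_lt_of_le hx hy.1).trans hvar
  have hvfin : ∀ x ∈ Set.Ioi (0:ℝ), v x ≠ ⊤ := fun x hx =>
    ne_top_of_le_ne_top ENNReal.ofReal_ne_top (hvM x hx)
  have hvi : ∫⁻ x in Set.Ioi (0:ℝ), v x ≤ ENNReal.ofReal (2 * M) := by
    refine (lintegral_eVariationOn_Icc_le f hfin).trans ?_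
    rw [ENNReal.ofReal_mul (by norm_num)]
    gcongr
    simp
  have hfv : ∀ x ∈ Set.Ioi (0:ℝ), ∀ y ∈ Set.Icc x (x + 2), ‖F y - f x‖ ≤ (v x).toReal := by
    intro x hx y hy
    rw [hF, Set.indicator_of_mem (show y ∈ Set.Ioi (0:ℝ) from lt_of_lt_of_le hx hy.1)]
    have := eVariationOn.edist_le f hy (show x ∈ Set.Icc x (x + 2) from ⟨le_rfl, by linarith⟩)
    rw [edist_dist, dist_eq_norm] at this
    exact (ENNReal.ofReal_le_iff_le_toReal (hvfin x hx)).1 this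
  have hhv : ∀ x ∈ Set.Ioi (0:ℝ), ∀ y ∈ Set.Icc x (x + 1), ‖h y - f x‖ ≤ (v x).toReal := by
    intro x hx y hy
    exact norm_integral_add_one_sub_le (hFi _ _) fun z hz =>
      hfv x hx z ⟨hy.1.trans hz.1.le, by linarith [hz.2, hy.2]⟩
  set g : ℝ → ℂ := fun x => ∫ y in x..(x + 1), h y with hg
  have hgv : ∀ x ∈ Set.Ioi (0:ℝ), ‖g x - f x‖ ≤ (v x).toReal := by
    intro x hx
    exact norm_integral_add_one_sub_le (hcont.intervalIntegrable _ _) fun z hz =>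
      hhv x hx z ⟨hz.1.le, hz.2⟩
  have hgv' : ∀ x ∈ Set.Ioi (0:ℝ), ‖h (x + 1) - h x‖ ≤ 2 * (v x).toReal := by
    intro x hx
    have h1 := hhv x hx (x + 1) ⟨by linarith, le_rfl⟩
    have h2 := hhv x hx x ⟨le_rfl, by linarith⟩
    calc ‖h (x + 1) - h x‖ = ‖(h (x + 1) - f x) - (h x - f x)‖ := by congr 1; ring
      _ ≤ _ := norm_sub_le _ _
      _ ≤ _ := by linarith
  have hvM' : ∀ x ∈ Set.Ioi (0:ℝ), (v x).toReal ≤ M := fun x hx =>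
    ENNReal.toReal_le_of_le_ofReal hM (hvM x hx)
  have hev : ∀ x ∈ Set.Ioi (0:ℝ), ‖g x - f x‖ₑ ≤ v x := by
    intro x hx
    rw [← ofReal_norm, ENNReal.ofReal_le_iff_le_toReal (hvfin x hx)]
    exact hgv x hx
  refine ⟨fun x hx => (hKf x hx).trans (by linarith), g, fun x => h (x + 1) - h x,
    hasDerivAt_integral_add_one hcont,
    (hcont.comp (continuous_add_const 1)).sub hcont, fun x hx => ?_, fun x hx => ?_, ?_, ?_, ?_⟩
  · have h1 := norm_sub_norm_le (g x) (f x)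
    linarith [hgv x hx, hvM' x hx, hKf x hx]
  · linarith [hgv' x hx, hvM' x hx]
  · have hpt : ∀ x ∈ Set.Ioi (0:ℝ), ‖g x‖ₑ ^ p ≤
        2 ^ p * ‖f x‖ₑ ^ p + 2 ^ p * (v x * ENNReal.ofReal (M ^ (p - 1))) := by
      intro x hx
      have h1 : ‖g x‖ₑ ≤ ‖f x‖ₑ + v x := by
        calc ‖g x‖ₑ = ‖f x + (g x - f x)‖ₑ := by congr 1; ring
          _ ≤ _ := enorm_add_le _ _
          _ ≤ _ := by gcongr; exact hev x hx
      have h2 : v x ^ p ≤ v x * ENNReal.ofReal (M ^ (p - 1)) := by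
        obtain ⟨q, rfl⟩ := Nat.exists_eq_succ_of_ne_zero hp
        rw [pow_succ']
        simp only [Nat.succ_eq_add_one, Nat.add_sub_cancel]
        rw [ENNReal.ofReal_pow hM]
        gcongr
        exact hvM x hx
      have h3 : (‖f x‖ₑ + v x) ^ p ≤ 2 ^ p * (‖f x‖ₑ ^ p + v x ^ p) := by
        rcases le_total ‖f x‖ₑ (v x) with hle | hle
        · calc (‖f x‖ₑ + v x) ^ p ≤ (2 * v x) ^ p := by
                rw [two_mul]; gcongr
            _ = 2 ^ p * v x ^ p := mul_pow _ _ _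
            _ ≤ _ := by gcongr; exact le_add_self
        · calc (‖f x‖ₑ + v x) ^ p ≤ (2 * ‖f x‖ₑ) ^ p := by
                rw [two_mul]; gcongr
            _ = 2 ^ p * ‖f x‖ₑ ^ p := mul_pow _ _ _
            _ ≤ _ := by gcongr; exact le_self_add
      calc ‖g x‖ₑ ^ p ≤ (‖f x‖ₑ + v x) ^ p := by gcongr
        _ ≤ _ := h3
        _ ≤ _ := by rw [mul_add]; gcongr
    calc ∫⁻ x in Set.Ioi (0:ℝ), ‖g x‖ₑ ^ p
        ≤ ∫⁻ x in Set.Ioi (0:ℝ), (2 ^ p * ‖f x‖ₑ ^ p +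
            2 ^ p * (v x * ENNReal.ofReal (M ^ (p - 1)))) :=
          setLIntegral_mono' measurableSet_Ioi hpt
      _ = 2 ^ p * (∫⁻ x in Set.Ioi (0:ℝ), ‖f x‖ₑ ^ p) +
            2 ^ p * ((∫⁻ x in Set.Ioi (0:ℝ), v x) * ENNReal.ofReal (M ^ (p - 1))) := by
          rw [lintegral_add_left' ((hmeas.enorm.pow_const p).const_mul _),
            lintegral_const_mul' _ _ (by finiteness), lintegral_const_mul' _ _ (by finiteness),
            lintegral_mul_const' _ _ (by finiteness)]
      _ ≤ 2 ^ p * ENNReal.ofReal M + 2 ^ p * (ENNReal.ofReal (2 * M) *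
            ENNReal.ofReal (M ^ (p - 1))) := by gcongr
      _ = ENNReal.ofReal (2 ^ p * (M + (2 * M) * M ^ (p - 1))) := by
          have h2M : 0 ≤ 2 * M := by linarith
          have hMp : 0 ≤ M ^ (p - 1) := by positivity
          have h2 : ENNReal.ofReal (2 ^ p) = 2 ^ p := by
            rw [ENNReal.ofReal_pow (by norm_num)]; simp
          rw [← ENNReal.ofReal_mul h2M, ← mul_add,
            ← ENNReal.ofReal_add hM (mul_nonneg h2M hMp), ← h2,
            ← ENNReal.ofReal_mul (by positivity)]
      _ ≤ _ := ENNReal.ofReal_le_ofReal (by linarith)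
  · calc ∫⁻ x in Set.Ioi (0:ℝ), ‖h (x + 1) - h x‖ₑ
        ≤ ∫⁻ x in Set.Ioi (0:ℝ), 2 * v x := by
          refine setLIntegral_mono' measurableSet_Ioi fun x hx => ?_
          rw [← ofReal_norm, ← ENNReal.ofReal_toReal (hvfin x hx)]
          refine (ENNReal.ofReal_le_ofReal (hgv' x hx)).trans ?_
          rw [ENNReal.ofReal_mul (by norm_num)]
          simp
      _ = 2 * ∫⁻ x in Set.Ioi (0:ℝ), v x := lintegral_const_mul' _ _ (by finiteness)
      _ ≤ 2 * ENNReal.ofReal (2 * M) := by gcongr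
      _ = ENNReal.ofReal (2 * (2 * M)) := by rw [ENNReal.ofReal_mul (by norm_num)]; simp
      _ ≤ _ := ENNReal.ofReal_le_ofReal (by linarith)
  · calc ∫⁻ x in Set.Ioi (0:ℝ), ‖f x - g x‖ₑ ≤ ∫⁻ x in Set.Ioi (0:ℝ), v x := by
          refine setLIntegral_mono' measurableSet_Ioi fun x hx => ?_
          rw [enorm_sub_rev]
          exact hev x hx
      _ ≤ _ := hvi
      _ ≤ _ := ENNReal.ofReal_le_ofReal (by linarith)

theorem tendsto_zero_of_lintegral_pow {p : ℕ} (hp : p ≠ 0) {B : ℝ} {g g' : ℝ → ℂ}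
    (hd : ∀ x, HasDerivAt g (g' x) x) (hc : Continuous g')
    (hB : ∀ x ∈ Set.Ioi (0:ℝ), ‖g x‖ ≤ B)
    (hp1 : ∫⁻ x in Set.Ioi (0:ℝ), ‖g x‖ₑ ^ p ≤ ENNReal.ofReal B)
    (hp2 : ∫⁻ x in Set.Ioi (0:ℝ), ‖g' x‖ₑ ≤ ENNReal.ofReal B) :
    Filter.Tendsto g Filter.atTop (nhds 0) := by
  have hgc : Continuous g := continuous_iff_continuousAt.2 fun x => (hd x).continuousAt
  have hg'i : IntegrableOn g' (Set.Ioi 0) :=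
    ⟨hc.aestronglyMeasurable, hp2.trans_lt ENNReal.ofReal_lt_top⟩
  have h1 : Filter.Tendsto (fun x => g x ^ p) Filter.atTop (nhds 0) := by
    refine tendsto_zero_of_hasDerivAt_of_integrableOn_Ioi (a := 0)
      (f' := fun x => (p * g x ^ (p - 1)) * g' x) (fun x _ => (hd x).pow p) ?_ ?_
    · refine hg'i.bdd_mul (c := p * B ^ (p - 1)) (by fun_prop) ?_
      refine (ae_restrict_iff' measurableSet_Ioi).2 (Filter.Eventually.of_forall fun x hx => ?_)
      rw [norm_mul, norm_pow, Complex.norm_natCast]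
      gcongr
      exact hB x hx
    · refine ⟨by fun_prop, ?_⟩
      refine lt_of_le_of_lt ?_ (hp1.trans_lt ENNReal.ofReal_lt_top)
      simp [enorm_pow]
  rw [tendsto_zero_iff_norm_tendsto_zero] at h1 ⊢
  have h2 := h1.rpow_const (p := (p:ℝ)⁻¹) (Or.inr (by positivity))
  rw [Real.zero_rpow (by positivity)] at h2
  refine h2.congr fun x => ?_
  rw [norm_pow, Real.pow_rpow_inv_natCast (norm_nonneg _) hp]

/-- The product of the values `h k x` over the nodes of a tree. -/
noncomputable def BinaryTree.value (h : ℕ → ℝ → ℂ) (x : ℝ) : BinaryTree ℕ → ℂ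
  | .nil => 1
  | .node k l r => h k x * (l.value h x * r.value h x)

/-- The non-oscillatory part of the derivative of `BinaryTree.value`. -/
noncomputable def BinaryTree.remainder (h d : ℕ → ℝ → ℂ) (x : ℝ) : BinaryTree ℕ → ℂ
  | .nil => 0
  | .node k l r => d k x * (l.value h x * r.value h x) +
      h k x * (l.remainder h d x * r.value h x + l.value h x * r.remainder h d x)

/-- The sum of `w k` over the nodes of a tree. -/
noncomputable def BinaryTree.nodeSum (w : ℕ → ℝ≥0∞) : BinaryTree ℕ → ℝ≥0∞
  | .nil => 0
  | .node k l r => w k + (l.nodeSum w + r.nodeSum w)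

/-- The maximum of `w k` over the nodes of a tree. -/
noncomputable def BinaryTree.nodeMax (w : ℕ → ℝ≥0∞) : BinaryTree ℕ → ℝ≥0∞
  | .nil => 0
  | .node k l r => max (w k) (max (l.nodeMax w) (r.nodeMax w))

section

variable {φ : ℕ → ℝ} {h d : ℕ → ℝ → ℂ} {B : ℝ}

theorem BinaryTree.hasDerivAt_value {x : ℝ}
    (hh : ∀ k, HasDerivAt (h k) (-Complex.I * φ k * h k x + d k x) x) (t : BinaryTree ℕ) :
    HasDerivAt (fun x => t.value h x)
      (-Complex.I * t.freq φ * t.value h x + t.remainder h d x) x := by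
  induction t with
  | nil => simpa [value, freq, remainder] using hasDerivAt_const x (1:ℂ)
  | node k l r hl hr =>
    simp only [value, freq, remainder]
    convert! (hh k).mul (hl.mul hr) using 1
    push_cast
    simp only [Pi.mul_apply]
    ring

theorem BinaryTree.continuous_value (hh : ∀ k, Continuous (h k)) (t : BinaryTree ℕ) :
    Continuous fun x => t.value h x := by
  induction t with
  | nil => exact continuous_const
  | node k l r hl hr => exact (hh k).mul (hl.mul hr)

theorem BinaryTree.continuous_remainder (hh : ∀ k, Continuous (h k))
    (hd : ∀ k, Continuous (d k)) (t : BinaryTree ℕ) :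
    Continuous fun x => t.remainder h d x := by
  induction t with
  | nil => exact continuous_const
  | node k l r hl hr =>
    exact ((hd k).mul ((l.continuous_value hh).mul (r.continuous_value hh))).add
      ((hh k).mul ((hl.mul (r.continuous_value hh)).add ((l.continuous_value hh).mul hr)))

theorem BinaryTree.norm_value_le {x : ℝ} (hB : 0 ≤ B) (hh : ∀ k, ‖h k x‖ ≤ B)
    (t : BinaryTree ℕ) : ‖t.value h x‖ ≤ B ^ t.numNodes := by
  induction t with
  | nil => simp [value]
  | node k l r hl hr =>
    rw [value, norm_mul, norm_mul]
    calc _ ≤ B * (B ^ l.numNodes * B ^ r.numNodes) := by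
          gcongr
          exact hh k
      _ = _ := by simp only [numNodes]; ring

theorem BinaryTree.norm_remainder_le_aux {x : ℝ} (hB : 0 ≤ B) (hh : ∀ k, ‖h k x‖ ≤ B)
    (k : ℕ) (l r : BinaryTree ℕ) : ‖(node k l r).remainder h d x‖ ≤
      ‖d k x‖ * B ^ (l.numNodes + r.numNodes) + B * (‖l.remainder h d x‖ * B ^ r.numNodes +
        B ^ l.numNodes * ‖r.remainder h d x‖) := by
  have hl := l.norm_value_le hB hh
  have hr := r.norm_value_le hB hh
  rw [remainder]
  refine (norm_add_le _ _).trans ?_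
  rw [norm_mul, norm_mul, norm_mul, pow_add]
  gcongr
  · exact hh k
  · refine (norm_add_le _ _).trans ?_
    rw [norm_mul, norm_mul]
    gcongr

theorem BinaryTree.norm_remainder_le {x : ℝ} (hB : 0 ≤ B) (hh : ∀ k, ‖h k x‖ ≤ B)
    (hd : ∀ k, ‖d k x‖ ≤ B) (t : BinaryTree ℕ) :
    ‖t.remainder h d x‖ ≤ t.numNodes * B ^ t.numNodes := by
  induction t with
  | nil => simp [remainder]
  | node k l r hl hr =>
    calc _ ≤ _ := norm_remainder_le_aux hB hh k l r
      _ ≤ B * B ^ (l.numNodes + r.numNodes) + B * ((l.numNodes * B ^ l.numNodes) *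
            B ^ r.numNodes + B ^ l.numNodes * (r.numNodes * B ^ r.numNodes)) := by
          gcongr
          exact hd k
      _ = _ := by
          simp only [numNodes]
          push_cast
          ring

theorem BinaryTree.lintegral_remainder_le {s : Set ℝ} (hs : MeasurableSet s) (hB : 0 ≤ B)
    (hh : ∀ k, ∀ x ∈ s, ‖h k x‖ ≤ B) (hhc : ∀ k, Continuous (h k)) (hdc : ∀ k, Continuous (d k))
    (hd : ∀ k, ∫⁻ x in s, ‖d k x‖ₑ ≤ ENNReal.ofReal B) (t : BinaryTree ℕ) :
    ∫⁻ x in s, ‖t.remainder h d x‖ₑ ≤ ENNReal.ofReal (t.numNodes * B ^ t.numNodes) := by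
  induction t with
  | nil => simp [remainder]
  | node k l r hl hr =>
    set b := ENNReal.ofReal B
    have hb : ∀ n : ℕ, ENNReal.ofReal (n * B ^ n) = n * b ^ n := fun n => by
      rw [ENNReal.ofReal_mul (by positivity), ENNReal.ofReal_pow hB, ENNReal.ofReal_natCast]
    rw [hb] at hl hr ⊢
    have hdm : Measurable fun x => ‖d k x‖ₑ := (hdc k).measurable.enorm
    have hlm : Measurable fun x => ‖l.remainder h d x‖ₑ :=
      (l.continuous_remainder hhc hdc).measurable.enorm
    calc ∫⁻ x in s, ‖(node k l r).remainder h d x‖ₑ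
        ≤ ∫⁻ x in s, (‖d k x‖ₑ * b ^ (l.numNodes + r.numNodes) +
            b * (‖l.remainder h d x‖ₑ * b ^ r.numNodes +
            b ^ l.numNodes * ‖r.remainder h d x‖ₑ)) := by
          refine setLIntegral_mono' hs fun x hx => ?_
          simp only [← ofReal_norm]
          refine (ENNReal.ofReal_le_ofReal
            (norm_remainder_le_aux hB (fun k => hh k x hx) k l r)).trans_eq ?_
          rw [ENNReal.ofReal_add (by positivity) (by positivity),
            ENNReal.ofReal_mul (by positivity), ENNReal.ofReal_mul (by positivity),
            ENNReal.ofReal_add (by positivity) (by positivity),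
            ENNReal.ofReal_mul (by positivity), ENNReal.ofReal_mul (by positivity),
            ENNReal.ofReal_pow hB, ENNReal.ofReal_pow hB, ENNReal.ofReal_pow hB]
      _ = (∫⁻ x in s, ‖d k x‖ₑ) * b ^ (l.numNodes + r.numNodes) +
            b * ((∫⁻ x in s, ‖l.remainder h d x‖ₑ) * b ^ r.numNodes +
            b ^ l.numNodes * ∫⁻ x in s, ‖r.remainder h d x‖ₑ) := by
          rw [lintegral_add_left (hdm.mul_const _), lintegral_const_mul' _ _ (by finiteness),
            lintegral_add_left (hlm.mul_const _), lintegral_const_mul' _ _ (by finiteness),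
            lintegral_mul_const' _ _ (by finiteness), lintegral_mul_const' _ _ (by finiteness)]
      _ ≤ b * b ^ (l.numNodes + r.numNodes) + b * ((l.numNodes * b ^ l.numNodes) *
            b ^ r.numNodes + b ^ l.numNodes * (r.numNodes * b ^ r.numNodes)) := by
          gcongr
          exact hd k
      _ = _ := by
          simp only [numNodes]
          push_cast
          ring

theorem BinaryTree.enorm_value_le (x : ℝ) (t : BinaryTree ℕ) :
    ‖t.value h x‖ₑ ≤ t.nodeMax (fun k => ‖h k x‖ₑ) ^ t.numNodes := by
  induction t with
  | nil => simp [value]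
  | node k l r hl hr =>
    set w : ℕ → ℝ≥0∞ := fun k => ‖h k x‖ₑ with hw
    have h1 : ‖h k x‖ₑ ≤ (node k l r).nodeMax w := le_max_left (w k) _
    have h2 : l.nodeMax w ≤ (node k l r).nodeMax w := (le_max_left _ _).trans (le_max_right _ _)
    have h3 : r.nodeMax w ≤ (node k l r).nodeMax w := (le_max_right _ _).trans (le_max_right _ _)
    rw [value, enorm_mul, enorm_mul]
    set X := (node k l r).nodeMax w
    have hl' := hl.trans (pow_le_pow_left' h2 l.numNodes)
    have hr' := hr.trans (pow_le_pow_left' h3 r.numNodes)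
    calc _ ≤ X * (X ^ l.numNodes * X ^ r.numNodes) := by gcongr
      _ = _ := by simp only [numNodes]; ring

theorem BinaryTree.nodeMax_pow_le (w : ℕ → ℝ≥0∞) {p : ℕ} (hp : p ≠ 0) (t : BinaryTree ℕ) :
    t.nodeMax w ^ p ≤ t.nodeSum fun k => w k ^ p := by
  induction t with
  | nil => simp [nodeMax, nodeSum, hp]
  | node k l r hl hr =>
    simp only [nodeMax, nodeSum]
    rw [(pow_left_mono p).map_max, (pow_left_mono p).map_max]
    exact max_le le_self_add (max_le (hl.trans (le_self_add.trans le_add_self))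
      (hr.trans (le_add_self.trans le_add_self)))

theorem BinaryTree.nodeMax_le {w : ℕ → ℝ≥0∞} {b : ℝ≥0∞} (hw : ∀ k, w k ≤ b)
    (t : BinaryTree ℕ) : t.nodeMax w ≤ b := by
  induction t with
  | nil => simp [nodeMax]
  | node k l r hl hr => exact max_le (hw k) (max_le hl hr)

theorem BinaryTree.measurable_nodeSum {w : ℝ → ℕ → ℝ≥0∞} (hw : ∀ k, Measurable fun x => w x k)
    (t : BinaryTree ℕ) : Measurable fun x => t.nodeSum (w x) := by
  induction t with
  | nil => exact measurable_const
  | node k l r hl hr => exact (hw k).add (hl.add hr)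

theorem BinaryTree.lintegral_nodeSum_le {μ : Measure ℝ} {w : ℝ → ℕ → ℝ≥0∞} {b : ℝ≥0∞}
    (hw : ∀ k, Measurable fun x => w x k) (hb : ∀ k, ∫⁻ x, w x k ∂μ ≤ b) (t : BinaryTree ℕ) :
    ∫⁻ x, t.nodeSum (w x) ∂μ ≤ t.numNodes * b := by
  induction t with
  | nil => simp [nodeSum]
  | node k l r hl hr =>
    simp only [nodeSum, numNodes]
    rw [lintegral_add_left (hw k), lintegral_add_left (l.measurable_nodeSum hw)]
    calc _ ≤ b + (l.numNodes * b + r.numNodes * b) := by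
          gcongr
          exact hb k
      _ = _ := by push_cast; ring

theorem BinaryTree.lintegral_value_le {s : Set ℝ} (hs : MeasurableSet s) (hB : 1 ≤ B)
    {p : ℕ} (hp : p ≠ 0)
    (hh : ∀ k, ∀ x ∈ s, ‖h k x‖ ≤ B) (hhc : ∀ k, Continuous (h k))
    (hLp : ∀ k, ∫⁻ x in s, ‖h k x‖ₑ ^ p ≤ ENNReal.ofReal B) (t : BinaryTree ℕ)
    (ht : p ≤ t.numNodes) :
    ∫⁻ x in s, ‖t.value h x‖ₑ ≤ ENNReal.ofReal (t.numNodes * B ^ t.numNodes) := by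
  set b := ENNReal.ofReal B
  have hb : ENNReal.ofReal (t.numNodes * B ^ t.numNodes) = t.numNodes * b ^ t.numNodes := by
    rw [ENNReal.ofReal_mul (by positivity), ENNReal.ofReal_pow (by linarith),
      ENNReal.ofReal_natCast]
  have hb1 : 1 ≤ b := ENNReal.one_le_ofReal.2 hB
  obtain ⟨m, hm⟩ := Nat.exists_eq_add_of_le ht
  rw [hb]
  calc ∫⁻ x in s, ‖t.value h x‖ₑ
      ≤ ∫⁻ x in s, (t.nodeSum fun k => ‖h k x‖ₑ ^ p) * b ^ m := by
        refine setLIntegral_mono' hs fun x hx => ?_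
        refine (t.enorm_value_le x).trans ?_
        rw [hm, pow_add]
        gcongr
        · exact t.nodeMax_pow_le _ hp
        · refine t.nodeMax_le fun k => ?_
          rw [← ofReal_norm]
          exact ENNReal.ofReal_le_ofReal (hh k x hx)
    _ = (∫⁻ x in s, (t.nodeSum fun k => ‖h k x‖ₑ ^ p)) * b ^ m :=
        lintegral_mul_const' _ _ (by finiteness)
    _ ≤ t.numNodes * b * b ^ m := by
        gcongr
        exact t.lintegral_nodeSum_le (w := fun x k => ‖h k x‖ₑ ^ p)
          (fun k => ((hhc k).measurable.enorm.pow_const p)) hLp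
    _ ≤ t.numNodes * b ^ t.numNodes := by
        rw [mul_assoc, ← pow_succ']
        gcongr
        omega

theorem BinaryTree.tendsto_value (hh : ∀ k, Filter.Tendsto (h k) Filter.atTop (nhds 0))
    (t : BinaryTree ℕ) :
    Filter.Tendsto (fun x => t.value h x) Filter.atTop (nhds (if t.numNodes = 0 then 1 else 0)) := by
  induction t with
  | nil => simp [value]
  | node k l r hl hr => simpa [value, numNodes] using (hh k).mul (hl.mul hr)

end

theorem HasSum.binaryTree {α G : Type*} [AddCommMonoid G] [TopologicalSpace G] [ContinuousAdd G]
    {f : BinaryTree α → G} {a : G}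
    (hf : HasSum (fun q : α × BinaryTree α × BinaryTree α => f (.node q.1 q.2.1 q.2.2)) a) :
    HasSum f (f .nil + a) := by
  let e : Unit ⊕ (α × BinaryTree α × BinaryTree α) ≃ BinaryTree α :=
    { toFun := Sum.elim (fun _ => .nil) fun q => .node q.1 q.2.1 q.2.2
      invFun := fun t => match t with
        | .nil => Sum.inl ()
        | .node k l r => Sum.inr (k, l, r)
      left_inv := by rintro (_ | ⟨k, l, r⟩) <;> rfl
      right_inv := by rintro (_ | ⟨k, l, r⟩) <;> rfl }
  rw [← e.hasSum_iff]
  refine HasSum.sum ?_ hf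
  exact hasSum_unique (fun _ : Unit => f .nil)

theorem BinaryTree.truncCoeff_node_mul {p : ℕ} {c : ℕ → ℂ} {φ : ℕ → ℝ} {η : ℝ}
    (hne : ∀ t : BinaryTree ℕ, 2 * η + t.freq φ ≠ 0) (k : ℕ) (l r : BinaryTree ℕ) :
    (node k l r).truncCoeff p c φ η * (2 * η + (node k l r).freq φ : ℝ) =
      if (node k l r).numNodes < p then
        c k / (2 * η) * (l.truncCoeff p c φ η * r.truncCoeff p c φ η) else 0 := by
  by_cases hlt : (node k l r).numNodes < p
  · have hl : l.numNodes < p := by simp only [numNodes] at hlt; omega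
    have hr : r.numNodes < p := by simp only [numNodes] at hlt; omega
    have h0 : ((2 * η + (node k l r).freq φ : ℝ) : ℂ) ≠ 0 := by exact_mod_cast hne _
    simp only [truncCoeff, if_pos hlt, if_pos hl, if_pos hr]
    rw [coeff]
    rw [mul_inv, Complex.ofReal_mul, Complex.ofReal_inv, Complex.ofReal_inv]
    push_cast at h0 ⊢
    field_simp
  · simp only [truncCoeff, if_neg hlt, zero_mul]

set_option maxHeartbeats 1000000 in
/-- The truncated tree expansion solves the Riccati equation
`A' = 2iη (A - 1) + V A² / (2iη)` up to an integrable error. -/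
theorem exists_approximate_riccati {p : ℕ} (hp : 2 ≤ p) {η : ℝ} (hη : 0 < η) {c : ℕ → ℂ}
    {φ : ℕ → ℝ} {h d f : ℕ → ℝ → ℂ} {B : ℝ} (hB : 1 ≤ B)
    (hne : ∀ t : BinaryTree ℕ, 2 * η + t.freq φ ≠ 0) (hc : Summable fun k => ‖c k‖)
    (ha : Summable fun t : BinaryTree ℕ => ‖t.truncCoeff p c φ η‖)
    (hder : ∀ k x, HasDerivAt (h k) (-Complex.I * φ k * h k x + d k x) x)
    (hdc : ∀ k, Continuous (d k)) (hhB : ∀ k, ∀ x ∈ Set.Ioi (0:ℝ), ‖h k x‖ ≤ B)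
    (hdB : ∀ k, ∀ x ∈ Set.Ioi (0:ℝ), ‖d k x‖ ≤ B)
    (hfB : ∀ k, ∀ x ∈ Set.Ioi (0:ℝ), ‖f k x‖ ≤ B)
    (hhp : ∀ k, ∫⁻ x in Set.Ioi (0:ℝ), ‖h k x‖ₑ ^ p ≤ ENNReal.ofReal B)
    (hdi : ∀ k, ∫⁻ x in Set.Ioi (0:ℝ), ‖d k x‖ₑ ≤ ENNReal.ofReal B)
    (hfh : ∀ k, ∫⁻ x in Set.Ioi (0:ℝ), ‖f k x - h k x‖ₑ ≤ ENNReal.ofReal B)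
    (hfm : ∀ k, AEMeasurable (f k) (volume.restrict (Set.Ioi 0)))
    (hh0 : ∀ k, Filter.Tendsto (h k) Filter.atTop (nhds 0)) :
    ∃ A A' : ℝ → ℂ, (∀ x ∈ Set.Ioi (0:ℝ), HasDerivAt A (A' x) x) ∧
      ContinuousOn A' (Set.Ioi 0) ∧ Filter.Tendsto A Filter.atTop (nhds 1) ∧
      ∫⁻ x in Set.Ioi (0:ℝ), ‖A' x - (2 * Complex.I * η * (A x - 1) +
        (∑' k, c k * f k x) / (2 * Complex.I * η) * A x ^ 2)‖ₑ < ⊤ := by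
  have hB0 : 0 ≤ B := by linarith
  have hhc : ∀ k, Continuous (h k) := fun k =>
    continuous_iff_continuousAt.2 fun x => (hder k x).continuousAt
  set a : BinaryTree ℕ → ℂ := fun t => t.truncCoeff p c φ η with ha_def
  have ha0 : ∀ t : BinaryTree ℕ, p ≤ t.numNodes → a t = 0 := fun t ht => by
    simp only [ha_def, BinaryTree.truncCoeff, if_neg (not_lt.2 ht)]
  have hanil : a .nil = 1 := by
    have h0 : (BinaryTree.nil : BinaryTree ℕ).numNodes < p := by
      simp only [BinaryTree.numNodes]
      omega
    simp only [ha_def, BinaryTree.truncCoeff, if_pos h0, BinaryTree.coeff]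
  set Q : ℝ := (2 * p : ℕ) * B ^ (2 * p) with hQ
  have hQn : ∀ n : ℕ, n ≤ 2 * p → n * B ^ n ≤ Q := fun n hn => by
    rw [hQ]
    gcongr
  have hQ0 : 0 ≤ Q := by positivity
  have hQ1 : ∀ n : ℕ, n ≤ 2 * p → B ^ n ≤ Q := fun n hn => by
    calc B ^ n ≤ B ^ (2 * p) := pow_le_pow_right₀ hB hn
      _ = 1 * B ^ (2 * p) := (one_mul _).symm
      _ ≤ _ := by
        rw [hQ]
        gcongr
        exact_mod_cast (by omega : 1 ≤ 2 * p)
  have hE : ∀ x ∈ Set.Ioi (0:ℝ), ∀ t : BinaryTree ℕ, t.numNodes ≤ 2 * p → ‖t.value h x‖ ≤ Q :=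
    fun x hx t ht => (t.norm_value_le hB0 fun k => hhB k x hx).trans (hQ1 _ ht)
  have hR : ∀ x ∈ Set.Ioi (0:ℝ), ∀ t : BinaryTree ℕ, t.numNodes ≤ 2 * p →
      ‖t.remainder h d x‖ ≤ Q := fun x hx t ht =>
    (t.norm_remainder_le hB0 (fun k => hhB k x hx) fun k => hdB k x hx).trans (hQn _ ht)
  -- multiplication by a coefficient supported on small trees
  have hmul : ∀ (b : BinaryTree ℕ → ℂ), (∀ t, p ≤ t.numNodes → b t = 0) →
      ∀ v : BinaryTree ℕ → ℂ, (∀ t : BinaryTree ℕ, t.numNodes ≤ 2 * p → ‖v t‖ ≤ Q) →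
      ∀ t, ‖b t * v t‖ ≤ ‖b t‖ * Q := by
    intro b hb v hv t
    rcases lt_or_ge t.numNodes p with ht | ht
    · rw [norm_mul]
      gcongr
      exact hv t (by omega)
    · simp [hb t ht]
  have hsaE : ∀ x ∈ Set.Ioi (0:ℝ), Summable fun t : BinaryTree ℕ => ‖a t * t.value h x‖ :=
    fun x hx => Summable.of_nonneg_of_le (fun _ => norm_nonneg _)
      (hmul a ha0 _ (hE x hx)) (ha.mul_right Q)
  have hsaR : ∀ x ∈ Set.Ioi (0:ℝ), Summable fun t : BinaryTree ℕ => ‖a t * t.remainder h d x‖ :=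
    fun x hx => Summable.of_nonneg_of_le (fun _ => norm_nonneg _)
      (hmul a ha0 _ (hR x hx)) (ha.mul_right Q)
  set b : BinaryTree ℕ → ℂ := fun t => a t * (2 * η + t.freq φ : ℝ) with hb_def
  have hb0 : ∀ t : BinaryTree ℕ, p ≤ t.numNodes → b t = 0 := fun t ht => by
    simp only [hb_def, ha0 t ht, zero_mul]
  have htriple : Summable fun q : ℕ × BinaryTree ℕ × BinaryTree ℕ =>
      ‖c q.1‖ * (‖a q.2.1‖ * ‖a q.2.2‖) :=
    hc.mul_of_nonneg (ha.mul_of_nonneg ha (fun _ => norm_nonneg _) fun _ => norm_nonneg _)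
      (fun _ => norm_nonneg _) fun _ => by positivity
  have hsb : Summable fun t => ‖b t‖ := by
    have h1 : Summable fun q : ℕ × BinaryTree ℕ × BinaryTree ℕ =>
        ‖b (.node q.1 q.2.1 q.2.2)‖ := by
      refine Summable.of_nonneg_of_le (fun _ => norm_nonneg _) ?_
        (htriple.mul_left (2 * η)⁻¹)
      rintro ⟨k, l, r⟩
      simp only [hb_def, ha_def]
      rw [BinaryTree.truncCoeff_node_mul hne]
      split_ifs
      · rw [norm_mul, norm_mul, norm_div, norm_mul, Complex.norm_real, Complex.norm_ofNat,
          Real.norm_of_nonneg hη.le]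
        apply le_of_eq
        ring
      · rw [norm_zero]
        positivity
    exact h1.hasSum.binaryTree.summable
  have hsaf : Summable fun t => ‖-Complex.I * t.freq φ * a t‖ := by
    refine Summable.of_nonneg_of_le (fun _ => norm_nonneg _) (fun t => ?_)
      (hsb.add (ha.mul_left (2 * η)))
    calc ‖-Complex.I * t.freq φ * a t‖ = ‖b t - 2 * η * a t‖ := by
          simp only [hb_def]
          push_cast
          rw [show a t * (2 * η + t.freq φ) - 2 * η * a t = t.freq φ * a t by ring]
          simp
      _ ≤ _ := norm_sub_le _ _
      _ = _ := by
          have h1 : ‖(2 * η : ℂ)‖ = 2 * η := by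
            rw [norm_mul, Complex.norm_real, Complex.norm_ofNat, Real.norm_of_nonneg hη.le]
          rw [norm_mul (2 * η : ℂ) (a t), h1]
  have hsafE : ∀ x ∈ Set.Ioi (0:ℝ),
      ∀ t : BinaryTree ℕ, ‖-Complex.I * t.freq φ * a t * t.value h x‖ ≤
        ‖-Complex.I * t.freq φ * a t‖ * Q := fun x hx =>
    hmul _ (fun t ht => by rw [ha0 t ht, mul_zero]) _ (hE x hx)
  have hsbE : ∀ x ∈ Set.Ioi (0:ℝ), Summable fun t : BinaryTree ℕ => ‖b t * t.value h x‖ :=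
    fun x hx => Summable.of_nonneg_of_le (fun _ => norm_nonneg _)
      (hmul b hb0 _ (hE x hx)) (hsb.mul_right Q)
  have hsu : Summable fun t : BinaryTree ℕ => ‖-Complex.I * t.freq φ * a t‖ * Q + ‖a t‖ * Q :=
    (hsaf.mul_right Q).add (ha.mul_right Q)
  set A : ℝ → ℂ := fun x => ∑' t : BinaryTree ℕ, a t * t.value h x with hA
  set A' : ℝ → ℂ := fun x => ∑' t : BinaryTree ℕ,
    (-Complex.I * t.freq φ * a t * t.value h x + a t * t.remainder h d x) with hA'
  have hA'b : ∀ (t : BinaryTree ℕ), ∀ x ∈ Set.Ioi (0:ℝ),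
      ‖-Complex.I * t.freq φ * a t * t.value h x + a t * t.remainder h d x‖ ≤
      ‖-Complex.I * t.freq φ * a t‖ * Q + ‖a t‖ * Q := fun t x hx =>
    (norm_add_le _ _).trans (add_le_add (hsafE x hx t) (hmul a ha0 _ (hR x hx) t))
  refine ⟨A, A', fun x hx => ?_, ?_, ?_, ?_⟩
  · refine hasDerivAt_tsum_of_isPreconnected hsu isOpen_Ioi isPreconnected_Ioi ?_ hA'b hx
      (hsaE x hx).of_norm hx
    intro t y hy
    convert! (t.hasDerivAt_value fun k => hder k y).const_mul (a t) using 1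
    ring
  · refine continuousOn_tsum (fun t => Continuous.continuousOn ?_) hsu hA'b
    exact (continuous_const.mul (t.continuous_value hhc)).add
      (continuous_const.mul (t.continuous_remainder hhc hdc))
  · have h1 : ∑' t : BinaryTree ℕ, a t * (if t.numNodes = 0 then 1 else 0) = 1 := by
      rw [tsum_eq_single BinaryTree.nil]
      · simp [hanil]
      · intro t ht
        cases t with
        | nil => exact absurd rfl ht
        | node k l r => simp
    rw [← h1]
    refine tendsto_tsum_of_dominated_convergence (ha.mul_right Q)
      (fun t => (t.tendsto_value hh0).const_mul (a t)) ?_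
    filter_upwards [Filter.eventually_gt_atTop 0] with x hx
    exact hmul a ha0 _ (hE x hx)
  -- the error term
  set H : ℝ → ℕ × BinaryTree ℕ × BinaryTree ℕ → ℂ := fun x q =>
    c q.1 * (a q.2.1 * a q.2.2) * (BinaryTree.node q.1 q.2.1 q.2.2).value h x with hH
  set N : ℝ → ℕ × BinaryTree ℕ × BinaryTree ℕ → ℂ := fun x q =>
    if (BinaryTree.node q.1 q.2.1 q.2.2).numNodes < p then 0 else H x q with hN
  have hHb : ∀ x ∈ Set.Ioi (0:ℝ), ∀ q, ‖H x q‖ ≤ ‖c q.1‖ * (‖a q.2.1‖ * ‖a q.2.2‖) * Q := by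
    rintro x hx ⟨k, l, r⟩
    simp only [hH]
    rcases lt_or_ge l.numNodes p with hl | hl
    · rcases lt_or_ge r.numNodes p with hr | hr
      · rw [norm_mul, norm_mul, norm_mul]
        gcongr
        apply hE x hx
        simp only [BinaryTree.numNodes]
        omega
      · simp [ha0 r hr]
    · simp [ha0 l hl]
  have hsH : ∀ x ∈ Set.Ioi (0:ℝ), Summable (H x) := fun x hx =>
    Summable.of_norm_bounded (htriple.mul_right Q) (hHb x hx)
  have hsN : ∀ x ∈ Set.Ioi (0:ℝ), Summable (N x) := fun x hx =>
    Summable.of_norm_bounded (htriple.mul_right Q) fun q => by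
      simp only [hN]
      split_ifs
      · rw [norm_zero]; positivity
      · exact hHb x hx q
  have hsch : ∀ x ∈ Set.Ioi (0:ℝ), Summable fun k => ‖c k * h k x‖ := fun x hx =>
    Summable.of_nonneg_of_le (fun _ => norm_nonneg _) (fun k => by
      rw [norm_mul]
      gcongr
      exact hhB k x hx) (hc.mul_right B)
  have hscf : ∀ x ∈ Set.Ioi (0:ℝ), Summable fun k => ‖c k * f k x‖ := fun x hx =>
    Summable.of_nonneg_of_le (fun _ => norm_nonneg _) (fun k => by
      rw [norm_mul]
      gcongr
      exact hfB k x hx) (hc.mul_right B)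
  have hHsum : ∀ x ∈ Set.Ioi (0:ℝ), ∑' q, H x q = (∑' k, c k * h k x) * A x ^ 2 := by
    intro x hx
    rw [sq, hA]
    dsimp only
    rw [tsum_mul_tsum_of_summable_norm (hsaE x hx) (hsaE x hx),
      tsum_mul_tsum_of_summable_norm (hsch x hx) ((hsaE x hx).mul_norm (hsaE x hx))]
    congr 1
    ext ⟨k, l, r⟩
    simp only [hH, BinaryTree.value]
    ring
  have hbsum : ∀ x ∈ Set.Ioi (0:ℝ), ∑' t : BinaryTree ℕ, b t * t.value h x =
      2 * η + (2 * η : ℂ)⁻¹ * (∑' q, H x q - ∑' q, N x q) := by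
    intro x hx
    rw [← (hsH x hx).tsum_sub (hsN x hx), ← tsum_mul_left]
    have h1 : HasSum (fun q : ℕ × BinaryTree ℕ × BinaryTree ℕ =>
        b (.node q.1 q.2.1 q.2.2) * (BinaryTree.node q.1 q.2.1 q.2.2).value h x)
        (∑' q, (2 * η : ℂ)⁻¹ * (H x q - N x q)) := by
      convert! (((hsH x hx).sub (hsN x hx)).mul_left (2 * η : ℂ)⁻¹).hasSum using 1
      ext ⟨k, l, r⟩
      simp only [hb_def, ha_def, hN, hH]
      rw [BinaryTree.truncCoeff_node_mul hne]
      split_ifs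
      · ring
      · ring
    have h2 := (h1.binaryTree (f := fun t => b t * t.value h x)).tsum_eq
    rw [h2]
    simp [hb_def, hanil, BinaryTree.freq, BinaryTree.value]
  have hkey : ∀ x ∈ Set.Ioi (0:ℝ), A' x - (2 * Complex.I * η * (A x - 1) +
        (∑' k, c k * f k x) / (2 * Complex.I * η) * A x ^ 2) =
      (∑' t : BinaryTree ℕ, a t * t.remainder h d x) - (2 * Complex.I * η)⁻¹ * ∑' q, N x q -
        (2 * Complex.I * η)⁻¹ * A x ^ 2 * ∑' k, c k * (f k x - h k x) := by
    intro x hx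
    have h1 : A' x = 2 * Complex.I * η * A x - Complex.I * (∑' t : BinaryTree ℕ, b t * t.value h x)
        + ∑' t : BinaryTree ℕ, a t * t.remainder h d x := by
      rw [hA', hA]
      dsimp only
      rw [← tsum_mul_left, ← tsum_mul_left,
        ← ((hsaE x hx).of_norm.mul_left _).tsum_sub ((hsbE x hx).of_norm.mul_left _),
        ← (((hsaE x hx).of_norm.mul_left _).sub ((hsbE x hx).of_norm.mul_left _)).tsum_add
          (hsaR x hx).of_norm]
      congr 1
      ext t
      simp only [hb_def]
      push_cast
      ring
    have h2 : ∑' k, c k * (f k x - h k x) = ∑' k, c k * f k x - ∑' k, c k * h k x := by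
      rw [← (hscf x hx).of_norm.tsum_sub (hsch x hx).of_norm]
      congr 1
      ext k
      ring
    rw [h1, h2, hbsum x hx, hHsum x hx]
    have hη' : (η : ℂ) ≠ 0 := by exact_mod_cast hη.ne'
    have hI : (2 * Complex.I * η)⁻¹ = -Complex.I * (2 * (η:ℂ))⁻¹ := by
      rw [mul_inv, mul_inv, mul_inv, Complex.inv_I]
      ring
    rw [div_eq_mul_inv, hI]
    ring
  have hAb : ∀ x ∈ Set.Ioi (0:ℝ), ‖A x‖ ≤ ∑' t, ‖a t‖ * Q := fun x hx =>
    tsum_of_norm_bounded (ha.mul_right Q).hasSum (hmul a ha0 _ (hE x hx))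
  set K := ENNReal.ofReal (∑' t, ‖a t‖ * Q)
  set κ := ‖(2 * Complex.I * η : ℂ)⁻¹‖ₑ with hκ
  have hfin : ∀ {ι : Type} {u : ι → ℂ}, (Summable fun i => ‖u i‖) → ∑' i, ‖u i‖ₑ ≠ ⊤ := by
    intro ι u hu
    have := hu.tsum_ofReal_ne_top
    simpa using this
  have hfin1 : ∑' t, ‖a t‖ₑ * ENNReal.ofReal Q ≠ ⊤ := by
    rw [ENNReal.tsum_mul_right]
    exact ENNReal.mul_ne_top (hfin ha) ENNReal.ofReal_ne_top
  have hfin2 : ∑' q : ℕ × BinaryTree ℕ × BinaryTree ℕ,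
      ‖c q.1‖ₑ * (‖a q.2.1‖ₑ * ‖a q.2.2‖ₑ) * ENNReal.ofReal Q ≠ ⊤ := by
    rw [ENNReal.tsum_mul_right, tsum_triple_mul (fun k => ‖c k‖ₑ) (fun t => ‖a t‖ₑ)
      (fun t => ‖a t‖ₑ)]
    exact ENNReal.mul_ne_top (ENNReal.mul_ne_top (hfin hc) (ENNReal.mul_ne_top (hfin ha)
      (hfin ha))) ENNReal.ofReal_ne_top
  have hfin3 : ∑' k, ‖c k‖ₑ * ENNReal.ofReal B ≠ ⊤ := by
    rw [ENNReal.tsum_mul_right]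
    exact ENNReal.mul_ne_top (hfin hc) ENNReal.ofReal_ne_top
  have hRm : ∀ t : BinaryTree ℕ, Measurable fun x => ‖a t‖ₑ * ‖t.remainder h d x‖ₑ := fun t =>
    (t.continuous_remainder hhc hdc).measurable.enorm.const_mul _
  have hNm : ∀ q : ℕ × BinaryTree ℕ × BinaryTree ℕ, Measurable fun x => ‖N x q‖ₑ := fun q => by
    simp only [hN, hH]
    split_ifs
    · exact measurable_const
    · exact ((BinaryTree.continuous_value hhc _).measurable.const_mul _).enorm
  have hb1 : ∫⁻ x in Set.Ioi (0:ℝ), ∑' t : BinaryTree ℕ, ‖a t‖ₑ * ‖t.remainder h d x‖ₑ ≤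
      ∑' t, ‖a t‖ₑ * ENNReal.ofReal Q := by
    rw [lintegral_tsum fun t => (hRm t).aemeasurable]
    refine ENNReal.tsum_le_tsum fun t => ?_
    rw [lintegral_const_mul' _ _ enorm_ne_top]
    rcases lt_or_ge t.numNodes p with ht | ht
    · gcongr
      exact (t.lintegral_remainder_le measurableSet_Ioi hB0 hhB hhc hdc hdi).trans
        (ENNReal.ofReal_le_ofReal (hQn _ (by omega)))
    · simp [ha0 t ht]
  have hb2 : ∫⁻ x in Set.Ioi (0:ℝ), ∑' q, ‖N x q‖ₑ ≤
      ∑' q : ℕ × BinaryTree ℕ × BinaryTree ℕ,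
      ‖c q.1‖ₑ * (‖a q.2.1‖ₑ * ‖a q.2.2‖ₑ) * ENNReal.ofReal Q := by
    rw [lintegral_tsum fun t => (hNm t).aemeasurable]
    refine ENNReal.tsum_le_tsum ?_
    rintro ⟨k, l, r⟩
    simp only [hN, hH]
    by_cases hlt : (BinaryTree.node k l r).numNodes < p
    · simp only [if_pos hlt, enorm_zero, lintegral_zero]
      exact zero_le
    simp only [if_neg hlt, enorm_mul]
    rcases lt_or_ge l.numNodes p with hl | hl
    · rcases lt_or_ge r.numNodes p with hr | hr
      · rw [lintegral_const_mul' _ _ (by finiteness)]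
        gcongr
        refine (BinaryTree.lintegral_value_le measurableSet_Ioi hB (by omega) hhB hhc hhp _
          (not_lt.1 hlt)).trans (ENNReal.ofReal_le_ofReal (hQn _ ?_))
        simp only [BinaryTree.numNodes]
        omega
      · simp [ha0 r hr]
    · simp [ha0 l hl]
  have hb3 : ∫⁻ x in Set.Ioi (0:ℝ), ∑' k, ‖c k‖ₑ * ‖f k x - h k x‖ₑ ≤
      ∑' k, ‖c k‖ₑ * ENNReal.ofReal B := by
    have hm : ∀ k, AEMeasurable (fun x => ‖c k‖ₑ * ‖f k x - h k x‖ₑ)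
        (volume.restrict (Set.Ioi (0:ℝ))) := fun k =>
      ((hfm k).sub (hhc k).aemeasurable).enorm.const_mul _
    rw [lintegral_tsum hm]
    refine ENNReal.tsum_le_tsum fun k => ?_
    rw [lintegral_const_mul' _ _ enorm_ne_top]
    gcongr
    exact hfh k
  have hκt : κ ≠ ⊤ := enorm_ne_top
  have hKt : K ≠ ⊤ := ENNReal.ofReal_ne_top
  calc _ ≤ ∫⁻ x in Set.Ioi (0:ℝ), ((∑' t : BinaryTree ℕ, ‖a t‖ₑ * ‖t.remainder h d x‖ₑ) +
        (κ * (∑' q, ‖N x q‖ₑ) + κ * K ^ 2 * ∑' k, ‖c k‖ₑ * ‖f k x - h k x‖ₑ)) := by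
        refine setLIntegral_mono' measurableSet_Ioi fun x hx => ?_
        rw [hkey x hx, sub_sub]
        refine (enorm_sub_le).trans (add_le_add ?_ ((enorm_add_le _ _).trans (add_le_add ?_ ?_)))
        · refine enorm_tsum_le_tsum_enorm.trans_eq ?_
          simp_rw [enorm_mul]
        · rw [enorm_mul]
          gcongr
          exact enorm_tsum_le_tsum_enorm
        · rw [enorm_mul, enorm_mul, enorm_pow]
          gcongr
          · rw [← ofReal_norm]
            exact ENNReal.ofReal_le_ofReal (hAb x hx)
          · refine enorm_tsum_le_tsum_enorm.trans_eq ?_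
            simp_rw [enorm_mul]
    _ = (∫⁻ x in Set.Ioi (0:ℝ), ∑' t : BinaryTree ℕ, ‖a t‖ₑ * ‖t.remainder h d x‖ₑ) +
        (κ * (∫⁻ x in Set.Ioi (0:ℝ), ∑' q, ‖N x q‖ₑ) + κ * K ^ 2 *
          ∫⁻ x in Set.Ioi (0:ℝ), ∑' k, ‖c k‖ₑ * ‖f k x - h k x‖ₑ) := by
        rw [lintegral_add_left (Measurable.tsum hRm),
          lintegral_add_left ((Measurable.tsum hNm).const_mul _),
          lintegral_const_mul' _ _ hκt, lintegral_const_mul' _ _ (by finiteness)]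
    _ ≤ (∑' t, ‖a t‖ₑ * ENNReal.ofReal Q) + (κ * (∑' q : ℕ × BinaryTree ℕ × BinaryTree ℕ,
        ‖c q.1‖ₑ * (‖a q.2.1‖ₑ * ‖a q.2.2‖ₑ) * ENNReal.ofReal Q) + κ * K ^ 2 *
        ∑' k, ‖c k‖ₑ * ENNReal.ofReal B) := by gcongr
    _ < ⊤ := by
        refine ENNReal.add_lt_top.2 ⟨hfin1.lt_top, ENNReal.add_lt_top.2
          ⟨ENNReal.mul_lt_top hκt.lt_top hfin2.lt_top, ENNReal.mul_lt_top ?_ hfin3.lt_top⟩⟩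
        finiteness

theorem absolutelyContinuousOnInterval_of_hasDerivAt {f f' : ℝ → ℝ} {a b : ℝ} (hab : a ≤ b)
    (hf : ∀ x ∈ Set.Icc a b, HasDerivAt f (f' x) x) (hf' : ContinuousOn f' (Set.Icc a b)) :
    AbsolutelyContinuousOnInterval f a b := by
  obtain ⟨K, hK⟩ := isCompact_Icc.exists_bound_of_continuousOn hf'
  refine LipschitzOnWith.absolutelyContinuousOnInterval (K := K.toNNReal) ?_
  rw [Set.uIcc_of_le hab]
  refine (convex_Icc a b).lipschitzOnWith_of_nnnorm_hasDerivWithin_le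
    (fun x hx => (hf x hx).hasDerivWithinAt) fun x hx => ?_
  rw [← NNReal.coe_le_coe, coe_nnnorm]
  exact (hK x hx).trans (Real.le_coe_toNNReal K)

theorem abs_riccati_le {P T e₁ e₂ k : ℝ} (hk : 0 ≤ k) (h₁ : |e₁| ≤ k) (h₂ : |e₂| ≤ k) :
    |-2 * T * (e₁ * P + e₂ * T) + (P ^ 2 + T ^ 2) * e₂| ≤ 4 * k * (P ^ 2 + T ^ 2) :=
  calc _ ≤ |-2 * T * (e₁ * P + e₂ * T)| + |(P ^ 2 + T ^ 2) * e₂| := abs_add_le _ _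
    _ ≤ 2 * |T| * (|e₁| * |P| + |e₂| * |T|) + (|P| ^ 2 + |T| ^ 2) * |e₂| := by
        rw [abs_mul, abs_mul, abs_mul, abs_of_nonneg (by positivity : 0 ≤ P ^ 2 + T ^ 2),
          sq_abs, sq_abs, abs_neg, abs_two, ← abs_mul, ← abs_mul]
        gcongr
        exact abs_add_le _ _
    _ ≤ 2 * |T| * (k * |P| + k * |T|) + (|P| ^ 2 + |T| ^ 2) * k := by gcongr
    _ ≤ 4 * k * (|P| ^ 2 + |T| ^ 2) := by
        nlinarith [mul_nonneg hk (sq_nonneg (|P| - |T|)), mul_nonneg hk (sq_nonneg |P|)]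
    _ = _ := by rw [sq_abs, sq_abs]

/-- If `r + i s` solves the Riccati equation `m' + m² = q` up to an error `ε` of small integral and
`s ≤ -δ < 0`, then solutions of `u'' = q u` are controlled by their data at any point. -/
theorem sq_le_of_approximate_riccati {a b δ : ℝ} (hδ : 0 < δ)
    {r s r' s' q u v ε : ℝ → ℝ} (hr : ∀ x ∈ Set.Icc a b, HasDerivAt r (r' x) x)
    (hs : ∀ x ∈ Set.Icc a b, HasDerivAt s (s' x) x) (hr' : ContinuousOn r' (Set.Icc a b))
    (hs' : ContinuousOn s' (Set.Icc a b)) (hsδ : ∀ x ∈ Set.Icc a b, s x ≤ -δ)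
    (her : ∀ x ∈ Set.Icc a b, |r' x + r x ^ 2 - s x ^ 2 - q x| ≤ ε x)
    (hes : ∀ x ∈ Set.Icc a b, |s' x + 2 * r x * s x| ≤ ε x)
    (hε : IntervalIntegrable ε volume a b) (hεδ : ∫ x in a..b, ε x ≤ δ / 8)
    (hu : ∀ x ∈ Set.Icc a b, HasDerivAt u (v x) x)
    (hqu : IntervalIntegrable (fun x => q x * u x) volume a b)
    (hv : ∀ x ∈ Set.Icc a b, v x = v a + ∫ t in a..x, q t * u t)
    {x c : ℝ} (hx : x ∈ Set.Icc a b) (hc : c ∈ Set.Icc a b) :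
    δ * u x ^ 2 ≤ 2 * (((v c - r c * u c) ^ 2 + (s c * u c) ^ 2) * (-s c)⁻¹) := by
  have hab : a ≤ b := hc.1.trans hc.2
  have hui : Set.uIcc a b = Set.Icc a b := Set.uIcc_of_le hab
  set w : ℝ → ℝ := fun x => v a + ∫ t in a..x, q t * u t with hw
  have hwv : ∀ x ∈ Set.Icc a b, v x = w x := hv
  set N : ℝ → ℝ := fun x => ((w x - r x * u x) ^ 2 + (s x * u x) ^ 2) * (-s x)⁻¹ with hN
  have hs0 : ∀ x ∈ Set.Icc a b, 0 < -s x := fun x hx => by linarith [hsδ x hx]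
  have hwAC : AbsolutelyContinuousOnInterval w a b :=
    (absolutelyContinuousOnInterval_of_hasDerivAt hab (f' := fun _ => 0)
      (fun x _ => hasDerivAt_const x (v a)) continuousOn_const).add
      (hqu.absolutelyContinuousOnInterval_intervalIntegral (c := a) (by simp))
  have hrAC := absolutelyContinuousOnInterval_of_hasDerivAt hab hr hr'
  have hsAC := absolutelyContinuousOnInterval_of_hasDerivAt hab hs hs'
  have huAC : AbsolutelyContinuousOnInterval u a b :=
    absolutelyContinuousOnInterval_of_hasDerivAt hab (fun x hx => hwv x hx ▸ hu x hx)
      (hui ▸ hwAC.continuousOn)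
  have hsc : ContinuousOn s (Set.Icc a b) := fun x hx =>
    (hs x hx).continuousAt.continuousWithinAt
  have hiAC : AbsolutelyContinuousOnInterval (fun x => (-s x)⁻¹) a b := by
    refine absolutelyContinuousOnInterval_of_hasDerivAt hab (f' := fun x => - -s' x / (-s x) ^ 2)
      (fun x hx => (hs x hx).neg.fun_inv (hs0 x hx).ne') ?_
    exact (hs'.neg.neg).div (hsc.neg.pow 2) fun x hx => (pow_pos (hs0 x hx) 2).ne'
  have hNAC : AbsolutelyContinuousOnInterval N a b := by
    have h1 := hwAC.sub (hrAC.mul huAC)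
    have h2 := hsAC.mul huAC
    convert! ((h1.mul h1).add (h2.mul h2)).mul hiAC using 1
    ext x
    simp only [hN, Pi.mul_apply, Pi.sub_apply, Pi.add_apply]
    ring
  have hN0 : ∀ x ∈ Set.Icc a b, 0 ≤ N x := fun x hx =>
    mul_nonneg (by positivity) (inv_nonneg.2 (hs0 x hx).le)
  have hder : ∀ᵐ x, x ∈ Set.Icc a b → |deriv N x| ≤ 4 / δ * ε x * N x := by
    filter_upwards [hqu.ae_hasDerivAt_integral] with x hx1 hx
    have hwd : HasDerivAt w (q x * u x) x := by
      exact (hx1 (hui ▸ hx) a (by simp)).const_add (v a)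
    have hud : HasDerivAt u (w x) x := hwv x hx ▸ hu x hx
    have hNd := ((((hwd.sub ((hr x hx).mul hud)).pow 2).add (((hs x hx).mul hud).pow 2)).mul
      ((hs x hx).neg.fun_inv (hs0 x hx).ne')).deriv
    have hs1 := hs0 x hx
    have hε1 : 0 ≤ ε x := (abs_nonneg _).trans (hes x hx)
    have h1 : deriv N x = (-2 * (u x * -s x) * ((r' x + r x ^ 2 - s x ^ 2 - q x) *
        (w x - r x * u x) + (s' x + 2 * r x * s x) * (u x * -s x)) +
        ((w x - r x * u x) ^ 2 + (s x * u x) ^ 2) * (s' x + 2 * r x * s x)) / (-s x) ^ 2 := by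
      refine hNd.trans ?_
      simp only [Pi.mul_apply, Pi.sub_apply, Pi.add_apply, Pi.pow_apply, Pi.neg_apply]
      have := hs1.ne'
      have : s x ≠ 0 := by simpa using this
      field_simp
      ring
    have h2 : 4 / δ * ε x * N x = 4 * ε x * ((w x - r x * u x) ^ 2 + (s x * u x) ^ 2) *
        (δ⁻¹ * (-s x)⁻¹) := by
      simp only [hN]
      ring
    have h3 : (-s x)⁻¹ ≤ δ⁻¹ := inv_anti₀ hδ (by linarith [hsδ x hx])
    rw [h1, h2, abs_div, abs_of_pos (pow_pos hs1 2), div_eq_mul_inv, sq (-s x), mul_inv]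
    gcongr ?_ * (?_ * ?_)
    rw [show s x * u x = -(u x * -s x) by ring, neg_sq]
    exact abs_riccati_le hε1 (her x hx) (hes x hx)
  obtain ⟨y, hy, hymax⟩ := isCompact_Icc.exists_isMaxOn ⟨c, hc⟩ (hui ▸ hNAC.continuousOn)
  have hyc : N y ≤ 2 * N c := by
    have hsub : Set.uIcc c y ⊆ Set.Icc a b := Set.uIcc_subset_Icc hc hy
    have hε0 : ∀ x ∈ Set.Icc a b, 0 ≤ ε x := fun x hx => (abs_nonneg _).trans (hes x hx)
    have hab' : 0 ≤ ∫ x in a..b, ε x := intervalIntegral.integral_nonneg hab hε0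
    have hεi : |∫ x in c..y, ε x| ≤ δ / 8 := by
      refine (intervalIntegral.abs_integral_mono_interval (c := a) (d := b) ?_ ?_ hε).trans ?_
      · exact Set.uIoc_subset_uIoc_of_uIcc_subset_uIcc (hui ▸ hsub)
      · rw [Set.uIoc_of_le hab]
        filter_upwards [ae_restrict_mem measurableSet_Ioc] with x hx
        exact hε0 x (Set.Ioc_subset_Icc_self hx)
      · rwa [abs_of_nonneg hab']
    have h1 := (hNAC.mono (hui ▸ hsub)).integral_deriv_eq_sub
    have h2 : ‖∫ x in c..y, deriv N x‖ ≤ |∫ x in c..y, 4 / δ * N y * ε x| := by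
      refine intervalIntegral.norm_integral_le_abs_of_norm_le ?_
        ((hε.mono_set (hui ▸ hsub)).const_mul _)
      filter_upwards [ae_restrict_of_ae hder, ae_restrict_mem measurableSet_uIoc] with x hx hx'
      have hx' := hsub (Set.uIoc_subset_uIcc hx')
      have h3 : N x ≤ N y := hymax hx'
      have h4 := hε0 x hx'
      calc _ ≤ 4 / δ * ε x * N x := hx hx'
        _ ≤ 4 / δ * ε x * N y := by gcongr
        _ = _ := by ring
    rw [h1, intervalIntegral.integral_const_mul, abs_mul,
      abs_of_nonneg (mul_nonneg (by positivity) (hN0 y hy))] at h2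
    have h3 : 4 / δ * N y * |∫ x in c..y, ε x| ≤ N y / 2 := by
      calc _ ≤ 4 / δ * N y * (δ / 8) := by
            gcongr
            exact mul_nonneg (by positivity) (hN0 y hy)
        _ = _ := by field_simp; ring
    have h4 := le_abs_self (N y - N c)
    rw [Real.norm_eq_abs] at h2
    linarith
  have hxy : N x ≤ N y := hymax hx
  have hux : δ * u x ^ 2 ≤ N x := by
    have h1 := hs0 x hx
    calc δ * u x ^ 2 ≤ -s x * u x ^ 2 := by
          gcongr
          linarith [hsδ x hx]
      _ = (s x * u x) ^ 2 * (-s x)⁻¹ := by field_simp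
      _ ≤ _ := by
          simp only [hN]
          gcongr
          linarith [sq_nonneg (w x - r x * u x)]
  rw [hwv c hc]
  exact hux.trans (hxy.trans hyc)

theorem exists_intervalIntegral_le_of_integrableOn_Ioi {ε : ℝ → ℝ}
    (hε : IntegrableOn ε (Set.Ioi 0)) {δ : ℝ} (hδ : 0 < δ) :
    ∀ᶠ a in Filter.atTop, ∀ b, a ≤ b → ∫ x in a..b, ε x ≤ δ := by
  have hi : ∀ b, 0 ≤ b → IntervalIntegrable ε volume 0 b := fun b hb =>
    (intervalIntegrable_iff_integrableOn_Ioc_of_le hb).2 (hε.mono_set Set.Ioc_subset_Ioi_self)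
  have ht := intervalIntegral_tendsto_integral_Ioi 0 hε Filter.tendsto_id
  have hev := Metric.tendsto_atTop.1 ht (δ / 2) (by positivity)
  obtain ⟨N, hN⟩ := hev
  filter_upwards [Filter.eventually_ge_atTop N, Filter.eventually_ge_atTop 0] with a ha ha0 b hab
  rw [← intervalIntegral.integral_interval_sub_left (hi b (ha0.trans hab)) (hi a ha0)]
  have h1 := abs_lt.1 (Real.dist_eq _ _ ▸ hN a ha)
  have h2 := abs_lt.1 (Real.dist_eq _ _ ▸ hN b (ha.trans hab))
  simp only [id] at h1 h2
  linarith [h1.1, h2.2]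

theorem exists_abs_le_of_approximate_riccati {V : ℝ → ℝ} {K η : ℝ} (hη : 0 < η)
    (hVb : ∀ x ∈ Set.Ioi (0:ℝ), |V x| ≤ K) (hVm : AEMeasurable V (volume.restrict (Set.Ioi 0)))
    {A A' : ℝ → ℂ} (hA : ∀ x ∈ Set.Ioi (0:ℝ), HasDerivAt A (A' x) x)
    (hA' : ContinuousOn A' (Set.Ioi 0)) (hA1 : Filter.Tendsto A Filter.atTop (nhds 1))
    (he : ∫⁻ x in Set.Ioi (0:ℝ), ‖A' x - (2 * Complex.I * η * (A x - 1) +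
        (V x : ℂ) / (2 * Complex.I * η) * A x ^ 2)‖ₑ < ⊤)
    {u v : ℝ → ℝ} (hu : ∀ x ∈ Set.Ioi (0:ℝ), HasDerivAt u (v x) x)
    (huv : ∀ a b : ℝ, 0 < a → a ≤ b →
      IntervalIntegrable (fun x => (V x - η ^ 2) * u x) volume a b ∧
      v b - v a = ∫ x in a..b, (V x - η ^ 2) * u x) :
    ∃ C, ∀ x ∈ Set.Ioi (0:ℝ), |u x| ≤ C := by
  have hv : ∀ a b : ℝ, 0 < a → ∀ x ∈ Set.Icc a b,
      v x = v a + ∫ t in a..x, (V t - η ^ 2) * u t := fun a b ha x hx => by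
    rw [← (huv a x ha hx.1).2]
    ring
  have hI : ∀ {a b : ℝ}, 0 < a → Set.Icc a b ⊆ Set.Ioi 0 := fun ha x hx => ha.trans_le hx.1
  have hK : 0 ≤ K := (abs_nonneg _).trans (hVb 1 (by simp))
  -- near the origin
  obtain ⟨τ, hτ, C₁, hC₁⟩ : ∃ τ > 0, ∃ C, ∀ x ∈ Set.Ioc 0 τ, u x ^ 2 ≤ C := by
    set ε := 1 + (K + η ^ 2) with hε
    have hε0 : 0 < ε := by positivity
    refine ⟨(8 * ε)⁻¹, by positivity, 2 * (((v (8 * ε)⁻¹ - 0 * u (8 * ε)⁻¹) ^ 2 +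
      (-1 * u (8 * ε)⁻¹) ^ 2) * (- -1)⁻¹), fun x hx => ?_⟩
    have h := sq_le_of_approximate_riccati (a := x) (b := (8 * ε)⁻¹) one_pos
      (r := fun _ => 0) (s := fun _ => -1) (r' := fun _ => 0) (s' := fun _ => 0) (u := u) (v := v)
      (q := fun x => V x - η ^ 2) (ε := fun _ => ε)
      (fun x _ => hasDerivAt_const x 0) (fun x _ => hasDerivAt_const x (-1)) continuousOn_const
      continuousOn_const (fun _ _ => le_rfl) (fun y hy => ?_) (fun y _ => by simpa using hε0.le)
      intervalIntegrable_const ?_ (fun y hy => hu y (hI hx.1 hy)) (huv _ _ hx.1 hx.2).1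
      (hv _ _ hx.1) (x := x) (c := (8 * ε)⁻¹) ⟨le_rfl, hx.2⟩ ⟨hx.2, le_rfl⟩
    · rw [one_mul] at h
      exact h
    · have h1 := abs_le.1 (hVb y (hI hx.1 hy))
      rw [abs_le]
      constructor <;> nlinarith [h1.1, h1.2, sq_nonneg η]
    · rw [intervalIntegral.integral_const, smul_eq_mul]
      have h1 : (8 * ε)⁻¹ * ε = 1 / 8 := by field_simp
      nlinarith [mul_pos hx.1 hε0]
  -- near infinity
  obtain ⟨x₁, hx₁, C₂, hC₂⟩ : ∃ x₁ > 0, ∃ C, ∀ x ∈ Set.Ici x₁, η / 2 * u x ^ 2 ≤ C := by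
    set e : ℝ → ℂ := fun x => A' x - (2 * Complex.I * η * (A x - 1) +
        (V x : ℂ) / (2 * Complex.I * η) * A x ^ 2) with he_def
    have hAc : ContinuousOn A (Set.Ioi 0) := fun x hx => (hA x hx).continuousAt.continuousWithinAt
    have hem : AEStronglyMeasurable e (volume.restrict (Set.Ioi 0)) := by
      refine (hA'.aestronglyMeasurable measurableSet_Ioi).sub (AEStronglyMeasurable.add ?_ ?_)
      · exact (continuousOn_const.mul (hAc.sub continuousOn_const)).aestronglyMeasurable
          measurableSet_Ioi
      · exact ((Complex.measurable_ofReal.comp_aemeasurable hVm).div_const _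
          |>.aestronglyMeasurable).mul ((hAc.pow 2).aestronglyMeasurable measurableSet_Ioi)
    have hei : IntegrableOn e (Set.Ioi 0) := ⟨hem, he⟩
    set ε : ℝ → ℝ := fun x => 8 * η * ‖e x‖ with hε
    have hεi : IntegrableOn ε (Set.Ioi 0) := hei.norm.const_mul _
    set m : ℝ → ℂ := fun x => Complex.I * η * (A x - 2) / A x with hm
    set m' : ℝ → ℂ := fun x => 2 * Complex.I * η * A' x / A x ^ 2 with hm'
    have hm1 : Filter.Tendsto (fun x => (m x).im) Filter.atTop (nhds (-η)) := by
      have h1 : Filter.Tendsto m Filter.atTop (nhds (Complex.I * η * (1 - 2) / 1)) :=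
        ((hA1.sub_const 2).const_mul _).div hA1 one_ne_zero
      convert! (Complex.continuous_im.tendsto _).comp h1 using 2
      norm_num
    obtain ⟨x₁, hx₁0, hx₁A, hx₁m, hx₁ε⟩ :=
      ((Filter.eventually_gt_atTop (0:ℝ)).and
      ((Filter.eventually_forall_ge_atTop.2
        (Metric.tendsto_nhds.1 hA1 (1 / 2) (by norm_num))).and
      ((Filter.eventually_forall_ge_atTop.2
        (hm1.eventually_le_const (by linarith : -η < -(η / 2)))).and
      (exists_intervalIntegral_le_of_integrableOn_Ioi hεi
        (by positivity : 0 < η / 2 / 8))))).exists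
    have hAn : ∀ x, x₁ ≤ x → 1 / 2 ≤ ‖A x‖ := fun x hx => by
      have h1 := (hx₁A x hx).le
      rw [dist_eq_norm, norm_sub_rev] at h1
      have h2 := norm_sub_norm_le (1 : ℂ) (A x)
      rw [norm_one] at h2
      linarith
    have hAne : ∀ x, x₁ ≤ x → A x ≠ 0 := fun x hx => norm_pos_iff.1 (by linarith [hAn x hx])
    have hmd : ∀ x, x₁ ≤ x → HasDerivAt m (m' x) x := fun x hx => by
      have h1 := hA x (hx₁0.trans_le hx)
      convert! ((h1.sub_const 2).const_mul (Complex.I * η)).div h1 (hAne x hx) using 1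
      simp only [hm']
      congr 1
      ring
    have hm'c : ContinuousOn m' (Set.Ici x₁) := by
      have hsub : Set.Ici x₁ ⊆ Set.Ioi 0 := fun x hx => hx₁0.trans_le hx
      exact (continuousOn_const.mul (hA'.mono hsub)).div ((hAc.mono hsub).pow 2)
        fun x hx => pow_ne_zero 2 (hAne x hx)
    have hη' : (η : ℂ) ≠ 0 := by exact_mod_cast hη.ne'
    have hme : ∀ x, x₁ ≤ x → ‖m' x + m x ^ 2 - (V x - η ^ 2 : ℝ)‖ ≤ ε x := fun x hx => by
      have h0 := hAne x hx
      have h1 : m' x + m x ^ 2 - (V x - η ^ 2 : ℝ) = 2 * Complex.I * η / A x ^ 2 * e x := by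
        simp only [hm, hm', he_def]
        push_cast
        field_simp
        ring_nf
        simp only [Complex.I_sq]
        ring
      rw [h1, norm_mul]
      simp only [hε]
      gcongr
      rw [norm_div, norm_mul, norm_mul, Complex.norm_I, Complex.norm_real, Complex.norm_ofNat,
        Real.norm_of_nonneg hη.le, norm_pow, div_le_iff₀ (by positivity)]
      nlinarith [hAn x hx, mul_pos hη hη, mul_le_mul (hAn x hx) (hAn x hx) (by norm_num)
        (norm_nonneg _)]
    refine ⟨x₁, hx₁0, 2 * (((v x₁ - (m x₁).re * u x₁) ^ 2 + ((m x₁).im * u x₁) ^ 2) *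
      (-(m x₁).im)⁻¹), fun x hx => ?_⟩
    have hsub : ∀ {y}, y ∈ Set.Icc x₁ x → x₁ ≤ y := fun hy => hy.1
    exact sq_le_of_approximate_riccati (a := x₁) (b := x) (half_pos hη)
      (r := fun x => (m x).re) (s := fun x => (m x).im) (r' := fun x => (m' x).re)
      (s' := fun x => (m' x).im) (u := u) (v := v) (q := fun x => V x - η ^ 2) (ε := ε)
      (fun y hy => Complex.reCLM.hasFDerivAt.comp_hasDerivAt y (hmd y hy.1))
      (fun y hy => Complex.imCLM.hasFDerivAt.comp_hasDerivAt y (hmd y hy.1))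
      (Complex.continuous_re.comp_continuousOn (hm'c.mono fun y hy => hy.1))
      (Complex.continuous_im.comp_continuousOn (hm'c.mono fun y hy => hy.1))
      (fun y hy => hx₁m y hy.1)
      (fun y hy => by
        refine le_trans (le_of_eq ?_) ((Complex.abs_re_le_norm _).trans (hme y hy.1))
        congr 1
        simp only [Complex.sub_re, Complex.add_re, Complex.ofReal_re, sq, Complex.mul_re]
        ring)
      (fun y hy => by
        refine le_trans (le_of_eq ?_) ((Complex.abs_im_le_norm _).trans (hme y hy.1))
        congr 1
        simp only [Complex.sub_im, Complex.add_im, Complex.ofReal_im, sq, Complex.mul_im]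
        ring)
      ((intervalIntegrable_iff_integrableOn_Ioc_of_le hx).2
        (hεi.mono_set fun y hy => hx₁0.trans hy.1))
      (hx₁ε x hx) (fun y hy => hu y (hI hx₁0 hy)) (huv _ _ hx₁0 hx).1
      (hv _ _ hx₁0) ⟨hx, le_rfl⟩ ⟨le_rfl, hx⟩
  obtain ⟨C₃, hC₃⟩ := isCompact_Icc.exists_bound_of_continuousOn (s := Set.Icc τ x₁) (f := u)
    fun x hx => (hu x (hI hτ hx)).continuousAt.continuousWithinAt
  refine ⟨max (√C₁) (max C₃ (√(C₂ / (η / 2)))), fun x hx => ?_⟩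
  rcases le_total x τ with h1 | h1
  · exact (Real.abs_le_sqrt (hC₁ x ⟨hx, h1⟩)).trans (le_max_left _ _)
  rcases le_total x x₁ with h2 | h2
  · exact (hC₃ x ⟨h1, h2⟩).trans ((le_max_left _ _).trans (le_max_right _ _))
  · refine (Real.abs_le_sqrt ?_).trans ((le_max_right _ _).trans (le_max_right _ _))
    rw [le_div_iff₀' (half_pos hη)]
    exact hC₂ x h2

theorem IsWeakSolution.exists_norm_le {V : ℝ → ℝ} {η : ℝ} {u u' : ℝ → ℂ}
    (h : IsWeakSolution V (η ^ 2) u u')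
    (hreal : ∀ u v : ℝ → ℝ, (∀ x ∈ Set.Ioi (0:ℝ), HasDerivAt u (v x) x) →
      (∀ a b : ℝ, 0 < a → a ≤ b →
        IntervalIntegrable (fun x => (V x - η ^ 2) * u x) volume a b ∧
        v b - v a = ∫ x in a..b, (V x - η ^ 2) * u x) →
      ∃ C, ∀ x ∈ Set.Ioi (0:ℝ), |u x| ≤ C) :
    ∃ C : ℝ, ∀ x ∈ Set.Ioi (0:ℝ), ‖u x‖ ≤ C := by
  have key : ∀ L : ℂ →L[ℝ] ℝ, ∃ C, ∀ x ∈ Set.Ioi (0:ℝ), |L (u x)| ≤ C := by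
    intro L
    have hL : ∀ x, (V x - η ^ 2) * L (u x) = L ((V x : ℂ) * u x - ((η ^ 2 : ℝ) : ℂ) * u x) := by
      intro x
      rw [← sub_mul, ← Complex.ofReal_sub, ← Complex.real_smul, map_smul, smul_eq_mul]
    refine hreal (fun x => L (u x)) (fun x => L (u' x))
      (fun x hx => L.hasFDerivAt.comp_hasDerivAt x (h.1 x hx)) fun a b ha hab => ?_
    obtain ⟨h1, h2⟩ := h.2 a b ha hab
    simp only [hL]
    refine ⟨⟨L.integrable_comp h1.1, L.integrable_comp h1.2⟩, ?_⟩
    rw [L.intervalIntegral_comp_comm h1, ← h2, map_sub]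
  obtain ⟨C₁, hC₁⟩ := key Complex.reCLM
  obtain ⟨C₂, hC₂⟩ := key Complex.imCLM
  exact ⟨C₁ + C₂, fun x hx => (Complex.norm_le_abs_re_add_abs_im _).trans
    (add_le_add (hC₁ x hx) (hC₂ x hx))⟩

theorem Complex.norm_exp_neg_I_mul_ofReal_mul_ofReal (a x : ℝ) :
    ‖Complex.exp (-Complex.I * a * x)‖ = 1 := by
  rw [Complex.norm_exp]
  simp

/-- Off the exceptional set of energies all solutions are bounded. -/
theorem IsWeakSolution.exists_norm_le_of_potential_ne_top {p : ℕ} (hp : 2 ≤ p) {α : ℝ}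
    (hα0 : 0 < α) (hα1 : α ≤ 1) {c : ℕ → ℂ} {φ : ℕ → ℝ} {γ : ℕ → ℝ → ℂ}
    (hBV : ⨆ k, eVariationOn (γ k) (Set.Ioi 0) < ⊤)
    (hLp : ∫⁻ x in Set.Ioi (0:ℝ), (⨆ k, (‖γ k x‖₊ : ℝ≥0∞)) ^ p < ⊤)
    (hc : ∑' k, ‖c k‖ₑ ^ α ≠ ⊤) {V : ℝ → ℝ}
    (hV : ∀ x ∈ Set.Ioi (0:ℝ),
      (V x : ℂ) = ∑' k, c k * Complex.exp (-Complex.I * (φ k) * x) * γ k x)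
    {η : ℝ} (hη : 0 < η) (hne : ∀ t : BinaryTree ℕ, 2 * η + t.freq φ ≠ 0)
    (hpot : ∑' t : BinaryTree ℕ,
      (if t.numNodes < p then t.weight (fun k => ‖c k‖ₑ ^ α) else 0) *
        ENNReal.ofReal |2 * η - -t.freq φ| ^ (-(((p : ℝ) - 1) * α)) ≠ ⊤)
    {u u' : ℝ → ℂ} (hu : IsWeakSolution V (η ^ 2) u u') :
    ∃ C : ℝ, ∀ x ∈ Set.Ioi (0:ℝ), ‖u x‖ ≤ C := by
  have hp0 : p ≠ 0 := by omega
  set M := (⨆ k, eVariationOn (γ k) (Set.Ioi 0)).toReal +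
    (∫⁻ x in Set.Ioi (0:ℝ), (⨆ k, (‖γ k x‖₊ : ℝ≥0∞)) ^ p).toReal with hM
  obtain ⟨B, hB, hsm⟩ := exists_smoothing hp0 M
    (add_nonneg ENNReal.toReal_nonneg ENNReal.toReal_nonneg)
  have hvar : ∀ k, eVariationOn (γ k) (Set.Ioi 0) ≤ ENNReal.ofReal M := fun k =>
    calc _ ≤ ⨆ k, eVariationOn (γ k) (Set.Ioi 0) := le_iSup (fun k => eVariationOn (γ k) _) k
      _ = ENNReal.ofReal (⨆ k, eVariationOn (γ k) (Set.Ioi 0)).toReal :=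
        (ENNReal.ofReal_toReal hBV.ne).symm
      _ ≤ _ := ENNReal.ofReal_le_ofReal (le_add_of_nonneg_right ENNReal.toReal_nonneg)
  have hinteg : ∀ k, ∫⁻ x in Set.Ioi (0:ℝ), ‖γ k x‖ₑ ^ p ≤ ENNReal.ofReal M := fun k =>
    calc _ ≤ ∫⁻ x in Set.Ioi (0:ℝ), (⨆ k, (‖γ k x‖₊ : ℝ≥0∞)) ^ p :=
        lintegral_mono fun x => by
          gcongr
          exact le_iSup (fun k => (‖γ k x‖₊ : ℝ≥0∞)) k
      _ = ENNReal.ofReal (∫⁻ x in Set.Ioi (0:ℝ), (⨆ k, (‖γ k x‖₊ : ℝ≥0∞)) ^ p).toReal :=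
        (ENNReal.ofReal_toReal hLp.ne).symm
      _ ≤ _ := ENNReal.ofReal_le_ofReal (le_add_of_nonneg_left ENNReal.toReal_nonneg)
  have hγm : ∀ k, AEMeasurable (γ k) (volume.restrict (Set.Ioi 0)) := fun k =>
    BoundedVariationOn.aemeasurable_restrict measurableSet_Ioi
      ((hvar k).trans_lt ENNReal.ofReal_lt_top).ne
  choose hγB g g' hgd hgc hgB hg'B hgp hg'i hγg using fun k => hsm (γ k) (hvar k) (hinteg k)
  set z : ℕ → ℝ → ℂ := fun k x => Complex.exp (-Complex.I * φ k * x) with hz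
  have hz1 : ∀ k x, ‖z k x‖ = 1 := fun k x =>
    Complex.norm_exp_neg_I_mul_ofReal_mul_ofReal (φ k) x
  have hz1' : ∀ k x, ‖z k x‖ₑ = 1 := fun k x => by rw [← ofReal_norm, hz1, ENNReal.ofReal_one]
  have hzd : ∀ k x, HasDerivAt (z k) (-Complex.I * φ k * z k x) x := fun k x => by
    have h1 : HasDerivAt (fun x : ℝ => -Complex.I * φ k * (x : ℂ)) (-Complex.I * φ k) x := by
      simpa using (Complex.ofRealCLM.hasDerivAt (x := x)).const_mul (-Complex.I * φ k)
    convert! h1.cexp using 1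
    ring
  have hzc : ∀ k, Continuous (z k) := fun k =>
    continuous_iff_continuousAt.2 fun x => (hzd k x).continuousAt
  have hcs : Summable fun k => ‖c k‖ := by
    have h1 := ENNReal.summable_toReal (ENNReal.tsum_ne_top_of_tsum_rpow_ne_top hα0 hα1 hc)
    simpa using h1
  have hVf : ∀ x ∈ Set.Ioi (0:ℝ), (V x : ℂ) = ∑' k, c k * (z k x * γ k x) := fun x hx => by
    rw [hV x hx]
    simp only [hz, mul_assoc]
  have hfB : ∀ k, ∀ x ∈ Set.Ioi (0:ℝ), ‖z k x * γ k x‖ ≤ B := fun k x hx => by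
    rw [norm_mul, hz1, one_mul]
    exact hγB k x hx
  have hfm : ∀ k, AEMeasurable (fun x => z k x * γ k x) (volume.restrict (Set.Ioi 0)) := fun k =>
    (hzc k).aemeasurable.mul (hγm k)
  obtain ⟨A, A', hA, hA', hA1, he⟩ := exists_approximate_riccati hp hη (c := c) (φ := φ)
    (h := fun k x => z k x * g k x) (d := fun k x => z k x * g' k x)
    (f := fun k x => z k x * γ k x) hB hne hcs
    (summable_truncCoeff hp hα0 hα1 hc hη hne hpot)
    (fun k x => by
      convert! (hzd k x).mul (hgd k x) using 1
      ring)
    (fun k => (hzc k).mul (hgc k))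
    (fun k x hx => by
      rw [norm_mul, hz1, one_mul]
      exact hgB k x hx)
    (fun k x hx => by
      rw [norm_mul, hz1, one_mul]
      exact hg'B k x hx)
    hfB
    (fun k => by simpa only [enorm_mul, hz1', one_mul] using hgp k)
    (fun k => by simpa only [enorm_mul, hz1', one_mul] using hg'i k)
    (fun k => by simpa only [← mul_sub, enorm_mul, hz1', one_mul] using hγg k)
    hfm
    (fun k => by
      have h1 := tendsto_zero_of_lintegral_pow hp0 (hgd k) (hgc k) (hgB k) (hgp k) (hg'i k)
      rw [tendsto_zero_iff_norm_tendsto_zero] at h1 ⊢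
      simpa only [norm_mul, hz1, one_mul] using h1)
  have hVb : ∀ x ∈ Set.Ioi (0:ℝ), |V x| ≤ ∑' k, ‖c k‖ * B := fun x hx => by
    rw [← Real.norm_eq_abs, ← Complex.norm_real, hVf x hx]
    refine tsum_of_norm_bounded (hcs.mul_right B).hasSum fun k => ?_
    rw [norm_mul]
    gcongr
    exact hfB k x hx
  have hVm : AEMeasurable V (volume.restrict (Set.Ioi 0)) := by
    have h1 : AEMeasurable (fun x => (∑' k, c k * (z k x * γ k x)).re)
        (volume.restrict (Set.Ioi 0)) :=
      Complex.measurable_re.comp_aemeasurable (AEMeasurable.tsum fun k => (hfm k).const_mul (c k))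
    refine h1.congr ?_
    filter_upwards [ae_restrict_mem measurableSet_Ioi] with x hx
    rw [← hVf x hx, Complex.ofReal_re]
  refine hu.exists_norm_le fun u v hu huv =>
    exists_abs_le_of_approximate_riccati hη hVb hVm hA hA' hA1 ?_ hu huv
  refine lt_of_eq_of_lt (setLIntegral_congr_fun measurableSet_Ioi fun x hx => ?_) he
  simp only [hVf x hx]

theorem stmt0 (p : ℕ) (hp : 2 ≤ p) (α : ℝ) (hα0 : 0 < α) (hα1 : α < 1 / ((p : ℝ) - 1))
    (c : ℕ → ℂ) (φ : ℕ → ℝ) (γ : ℕ → ℝ → ℂ)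
    (hBV : ⨆ k, eVariationOn (γ k) (Set.Ioi 0) < ⊤)
    (hLp : ∫⁻ x in Set.Ioi (0:ℝ), (⨆ k, (‖γ k x‖₊ : ℝ≥0∞)) ^ p < ⊤)
    (hc : Summable fun k => ‖c k‖ ^ α)
    (V : ℝ → ℝ)
    (hV : ∀ x ∈ Set.Ioi (0:ℝ),
      (V x : ℂ) = ∑' k, c k * Complex.exp (-Complex.I * (φ k) * x) * γ k x) :
    dimH {E : ℝ | 0 < E ∧ ∃ u u' : ℝ → ℂ, IsWeakSolution V E u u' ∧
        ¬ ∃ C : ℝ, ∀ x ∈ Set.Ioi (0:ℝ), ‖u x‖ ≤ C} ≤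
      ENNReal.ofReal (((p : ℝ) - 1) * α) := by
  have hp' : (2 : ℝ) ≤ p := by exact_mod_cast hp
  have hα1' : α ≤ 1 := hα1.le.trans ((div_le_one (by linarith)).2 (by linarith))
  have hc' : ∑' k, ‖c k‖ₑ ^ α ≠ ⊤ := by
    convert! hc.tsum_ofReal_ne_top using 3 with k
    rw [← ofReal_norm, ENNReal.ofReal_rpow_of_nonneg (norm_nonneg _) hα0.le]
  set b : BinaryTree ℕ → ℝ≥0∞ := fun t =>
    if t.numNodes < p then t.weight (fun k => ‖c k‖ₑ ^ α) else 0 with hb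
  set T : Set ℝ := {x : ℝ | ∑' t : BinaryTree ℕ,
    b t * ENNReal.ofReal |x - -t.freq φ| ^ (-(((p : ℝ) - 1) * α)) = ⊤} with hT
  set R : Set ℝ := Set.range fun t : BinaryTree ℕ => -t.freq φ with hR
  have hs : 0 < ((p : ℝ) - 1) * α := mul_pos (by linarith) hα0
  have hdim : dimH (T ∪ R) ≤ ENNReal.ofReal (((p : ℝ) - 1) * α) := by
    rw [dimH_union, (Set.countable_range _).dimH_zero]
    exact max_le (dimH_potential_eq_top_le b _ (tsum_weight_ne_top hc' p) hs) zero_le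
  have hcd : ContDiffOn ℝ 1 (fun x : ℝ => x ^ 2 / 4) Set.univ := by fun_prop
  refine le_trans (dimH_mono ?_) ((hcd.dimH_image_le convex_univ (Set.subset_univ (T ∪ R))).trans
    hdim)
  rintro E ⟨hE, u, u', hu, hub⟩
  have hη : 0 < √E := Real.sqrt_pos.2 hE
  refine ⟨2 * √E, ?_, by
    simp only [mul_pow, Real.sq_sqrt hE.le]
    ring⟩
  by_contra hnot
  rw [Set.mem_union, not_or] at hnot
  refine hub (IsWeakSolution.exists_norm_le_of_potential_ne_top hp hα0 hα1' hBV hLp hc' hV hη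
    (fun t ht => hnot.2 ⟨t, ?_⟩) hnot.1 (u' := u') ?_)
  · simp only
    linarith
  · rwa [Real.sq_sqrt hE.le]
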